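/- arXiv:1708.02521 — 6 statements merged into one kernel-verified Lean document; each statement's English description precedes it below -/
import Mathlib

section
/- For every n ≥ 1, E[(max_{1≤l≤n} l^{−1}|S_l|)²] ≤ 16 (σ_h² − 2σ_w²) Σ_{i=1}^n i^{−1}; consequently E[(max_{1≤l≤n} l^{−1}|S_l|)²] ≤ 16 (σ_h² − 2σ_w²) log(3n). -/
open MeasureTheory ProbabilityTheory

noncomputable def Yd (d : ℕ → ℝ) (l : ℕ) : ℝ := ∑ j ∈ Finset.range l, d j / ((j : ℝ) + 1)

noncomputable def Mx (d : ℕ → ℝ) : ℕ → ℝ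
  | 0 => 0
  | l + 1 => max (Mx d l) |Yd d (l + 1)|

noncomputable def Cc (d : ℕ → ℝ) (k : ℕ) : ℝ := if 0 ≤ Yd d k then Mx d k else - Mx d k

lemma Yd_succ (d : ℕ → ℝ) (l : ℕ) : Yd d (l + 1) = Yd d l + d l / ((l : ℝ) + 1) := by
  simp [Yd, Finset.sum_range_succ]

lemma Mx_nonneg (d : ℕ → ℝ) (l : ℕ) : 0 ≤ Mx d l := by
  induction l with
  | zero => simp [Mx]
  | succ l ih => exact le_max_of_le_left ih

lemma abs_Cc (d : ℕ → ℝ) (k : ℕ) : |Cc d k| = Mx d k := by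
  unfold Cc
  split_ifs
  · exact abs_of_nonneg (Mx_nonneg d k)
  · rw [abs_neg, abs_of_nonneg (Mx_nonneg d k)]

lemma Mx_mono (d : ℕ → ℝ) : Monotone (Mx d) :=
  monotone_nat_of_le_succ fun _ => le_max_left _ _

lemma Yd_le_Mx (d : ℕ → ℝ) (l : ℕ) : |Yd d l| ≤ Mx d l := by
  cases l with
  | zero => simp [Yd, Mx]
  | succ l => exact le_max_right _ _

lemma pathwise (d : ℕ → ℝ) (n : ℕ) :
    2 * ∑ k ∈ Finset.range n, Cc d k * (d k / ((k : ℝ) + 1)) + Mx d n ^ 2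
      ≤ 2 * Mx d n * |Yd d n| := by
  induction n with
  | zero => simp [Mx]
  | succ n ih =>
    rw [Finset.sum_range_succ]
    have h1 : Cc d n * (d n / ((n : ℝ) + 1)) ≤ Mx d n * (|Yd d (n + 1)| - |Yd d n|) := by
      rw [Yd_succ]
      have hm := Mx_nonneg d n
      set e := d n / ((n : ℝ) + 1)
      unfold Cc
      split_ifs with hy
      · rw [abs_of_nonneg hy]
        exact mul_le_mul_of_nonneg_left (by linarith [le_abs_self (Yd d n + e)]) hm
      · rw [abs_of_neg (not_le.mp hy)]
        have := mul_le_mul_of_nonneg_left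
          (show -e ≤ |Yd d n + e| - -Yd d n by linarith [neg_abs_le (Yd d n + e)]) hm
        linarith
    have hM : Mx d (n + 1) = max (Mx d n) |Yd d (n + 1)| := rfl
    rcases le_total (Mx d n) |Yd d (n + 1)| with hc | hc
    · rw [hM, max_eq_right hc]
      nlinarith [sq_nonneg (Mx d n - |Yd d (n + 1)|)]
    · rw [hM, max_eq_left hc]
      nlinarith

lemma pathwise' (d : ℕ → ℝ) (n : ℕ) :
    Mx d n ^ 2 ≤ 4 * Yd d n ^ 2 - 4 * ∑ k ∈ Finset.range n, Cc d k * (d k / ((k : ℝ) + 1)) := by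
  have := pathwise d n
  have h2 := sq_abs (Yd d n)
  nlinarith [sq_nonneg (Mx d n - 2 * |Yd d n|)]

lemma abel (d : ℕ → ℝ) (l : ℕ) :
    ∑ j ∈ Finset.range l, d j = l * Yd d l - ∑ k ∈ Finset.range l, Yd d k := by
  induction l with
  | zero => simp
  | succ l ih =>
    rw [Finset.sum_range_succ, ih, Finset.sum_range_succ, Yd_succ]
    have : (l : ℝ) + 1 ≠ 0 := by positivity
    push_cast
    field_simp
    ring

lemma abs_sum_div_le (d : ℕ → ℝ) (l n : ℕ) (hl : 1 ≤ l) (hln : l ≤ n) :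
    |∑ j ∈ Finset.range l, d j| / l ≤ 2 * Mx d n := by
  have hl' : (0 : ℝ) < l := by exact_mod_cast hl
  rw [div_le_iff₀ hl', abel]
  have h1 : |∑ k ∈ Finset.range l, Yd d k| ≤ l * Mx d n := by
    calc _ ≤ ∑ k ∈ Finset.range l, |Yd d k| := Finset.abs_sum_le_sum_abs _ _
      _ ≤ ∑ k ∈ Finset.range l, Mx d n := Finset.sum_le_sum fun k hk =>
          (Yd_le_Mx d k).trans (Mx_mono d ((Finset.mem_range.mp hk).le.trans hln))
      _ = _ := by simp
  have h2 : |l * Yd d l| ≤ l * Mx d n := by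
    rw [abs_mul, abs_of_pos hl']
    exact mul_le_mul_of_nonneg_left ((Yd_le_Mx d l).trans (Mx_mono d hln)) hl'.le
  have := abs_sub (l * Yd d l) (∑ k ∈ Finset.range l, Yd d k)
  linarith

lemma kernel_facts {S : Type*} [MeasurableSpace S] (ν : Measure S) [IsProbabilityMeasure ν]
    (h : S → S → ℝ) (hmeas : Measurable (Function.uncurry h))
    (hsymm : ∀ x y, h x y = h y x)
    (hmean : ∫ z, h z.1 z.2 ∂(ν.prod ν) = 0)
    (hL2 : Integrable (fun z : S × S => h z.1 z.2 ^ 2) (ν.prod ν))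
    (w : S → ℝ) (hw : ∀ x, w x = ∫ y, h y x ∂ν) :
    Measurable w ∧ MemLp (fun z : S × S => h z.1 z.2 - w z.1 - w z.2) 2 (ν.prod ν) ∧
    (∀ᵐ x ∂ν, ∫ y, (h x y - w x - w y) ∂ν = 0) ∧
    ∫ z : S × S, (h z.1 z.2 - w z.1 - w z.2) ^ 2 ∂(ν.prod ν)
      = ∫ z : S × S, h z.1 z.2 ^ 2 ∂(ν.prod ν) - 2 * variance w ν := by
  have hwm : Measurable w := by
    have : w = fun x => ∫ y, h y x ∂ν := funext hw
    rw [this]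
    exact (hmeas.stronglyMeasurable.integral_prod_left (f := h)).measurable
  have hm2 : Measurable (fun z : S × S => h z.1 z.2) := hmeas
  have hh2 : MemLp (fun z : S × S => h z.1 z.2) 2 (ν.prod ν) :=
    (memLp_two_iff_integrable_sq hm2.aestronglyMeasurable).2 hL2
  have hh1 : Integrable (fun z : S × S => h z.1 z.2) (ν.prod ν) := hh2.integrable (by norm_num)
  have hw' : ∀ x, w x = ∫ y, h x y ∂ν := fun x => by simp_rw [hw, hsymm x]
  have hwi : ∫ x, w x ∂ν = 0 := by
    rw [← hmean, integral_prod _ hh1]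
    simp_rw [hw']
  have hw2 : MemLp w 2 ν := by
    rw [memLp_two_iff_integrable_sq hwm.aestronglyMeasurable]
    refine Integrable.mono' (g := fun x => ∫ y, h x y ^ 2 ∂ν) hL2.integral_prod_left
      (hwm.pow_const 2).aestronglyMeasurable ?_
    filter_upwards [hL2.prod_right_ae] with x hx
    have hmx : Measurable (fun y => h x y) := hmeas.comp measurable_prodMk_left
    have hx2 : MemLp (fun y => h x y) 2 ν :=
      (memLp_two_iff_integrable_sq hmx.aestronglyMeasurable).2 hx
    have := variance_nonneg (fun y => h x y) ν
    rw [variance_eq_sub hx2, ← hw'] at this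
    rw [Real.norm_of_nonneg (sq_nonneg _)]
    simpa using this
  have hw1 : Integrable w ν := hw2.integrable (by norm_num)
  have hwa : MemLp (fun z : S × S => w z.1) 2 (ν.prod ν) :=
    hw2.comp_measurePreserving measurePreserving_fst
  have hwb : MemLp (fun z : S × S => w z.2) 2 (ν.prod ν) :=
    hw2.comp_measurePreserving measurePreserving_snd
  have hΔ : MemLp (fun z : S × S => h z.1 z.2 - w z.1 - w z.2) 2 (ν.prod ν) :=
    (hh2.sub hwa).sub hwb
  have hz : ∀ᵐ x ∂ν, ∫ y, (h x y - w x - w y) ∂ν = 0 := by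
    filter_upwards [hh1.prod_right_ae] with x hx
    have hx' : Integrable (fun y => h x y - w x) ν := hx.sub (integrable_const _)
    rw [integral_sub hx' hw1, integral_sub hx (integrable_const _), ← hw', hwi]
    simp
  refine ⟨hwm, hΔ, hz, ?_⟩
  rw [variance_of_integral_eq_zero hwm.aemeasurable hwi]
  have e1 : ∫ z : S × S, w z.1 * (h z.1 z.2 - w z.1 - w z.2) ∂(ν.prod ν) = 0 := by
    have hi : Integrable (fun z : S × S => w z.1 * (h z.1 z.2 - w z.1 - w z.2)) (ν.prod ν) :=
      hwa.integrable_mul hΔ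
    rw [integral_prod _ hi]
    rw [integral_eq_zero_of_ae]
    filter_upwards [hz] with x hx
    simp only [integral_const_mul, hx, mul_zero, Pi.zero_apply]
  have e2 : ∫ z : S × S, w z.2 * (h z.1 z.2 - w z.1 - w z.2) ∂(ν.prod ν) = 0 := by
    rw [← integral_prod_swap, ← e1]
    congr 1
    ext z
    simp only [Prod.fst_swap, Prod.snd_swap, hsymm z.2 z.1]
    ring
  have e3 : ∫ z : S × S, w z.1 * w z.2 ∂(ν.prod ν) = 0 := by
    rw [integral_prod_mul, hwi, zero_mul]
  have e4 : ∫ z : S × S, w z.1 ^ 2 ∂(ν.prod ν) = ∫ x, w x ^ 2 ∂ν := by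
    rw [integral_prod _ hwa.integrable_sq]
    simp
  have e5 : ∫ z : S × S, w z.2 ^ 2 ∂(ν.prod ν) = ∫ x, w x ^ 2 ∂ν := by
    rw [integral_prod _ hwb.integrable_sq]
    simp
  have e6 : ∀ z : S × S, h z.1 z.2 ^ 2 = (h z.1 z.2 - w z.1 - w z.2) ^ 2
      + 2 * (w z.1 * (h z.1 z.2 - w z.1 - w z.2)) + 2 * (w z.2 * (h z.1 z.2 - w z.1 - w z.2))
      + 2 * (w z.1 * w z.2) + w z.1 ^ 2 + w z.2 ^ 2 := fun z => by ring
  have i0 := hΔ.integrable_sq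
  have i1 : Integrable (fun z : S × S => 2 * (w z.1 * (h z.1 z.2 - w z.1 - w z.2))) (ν.prod ν) :=
    (hwa.integrable_mul hΔ).const_mul 2
  have i2 : Integrable (fun z : S × S => 2 * (w z.2 * (h z.1 z.2 - w z.1 - w z.2))) (ν.prod ν) :=
    (hwb.integrable_mul hΔ).const_mul 2
  have i3 : Integrable (fun z : S × S => 2 * (w z.1 * w z.2)) (ν.prod ν) :=
    (hwa.integrable_mul hwb).const_mul 2
  have i4 := hwa.integrable_sq
  have i5 := hwb.integrable_sq
  simp_rw [e6]
  rw [integral_add ?_ i5, integral_add ?_ i4, integral_add ?_ i3, integral_add ?_ i2,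
    integral_add i0 i1,
    integral_const_mul, integral_const_mul, integral_const_mul, e1, e2, e3, e4, e5]
  · ring
  · exact i0.add i1
  · exact (i0.add i1).add i2
  · exact ((i0.add i1).add i2).add i3
  · exact (((i0.add i1).add i2).add i3).add i4

lemma orth {Ω : Type*} [MeasurableSpace Ω] (μ : Measure Ω) [IsProbabilityMeasure μ]
    {S : Type*} [MeasurableSpace S]
    (X : ℕ → Ω → S) (hX : ∀ i, Measurable (X i)) (hindep : iIndepFun X μ)
    (ν : Measure S) (hν : ∀ i, Measure.map (X i) μ = ν)
    (D : S → S → ℝ) (hD : Measurable (Function.uncurry D))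
    (hz : ∀ᵐ x ∂ν, ∫ y, D x y ∂ν = 0)
    (T : Finset ℕ) (i k : ℕ) (hi : i ∈ T) (hk : k ∉ T) (G : Ω → ℝ)
    (hG : Measurable[MeasurableSpace.comap (fun ω (j : T) => X j ω) inferInstance] G)
    (hint : Integrable (fun ω => G ω * D (X i ω) (X k ω)) μ) :
    ∫ ω, G ω * D (X i ω) (X k ω) ∂μ = 0 := by
  obtain ⟨g, hg, rfl⟩ := hG.exists_eq_measurable_comp
  set Z : Ω → (T → S) := fun ω j => X j ω with hZ
  have hZm : Measurable Z := measurable_pi_lambda _ fun j => hX j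
  have : IsProbabilityMeasure ν := by
    rw [← hν 0]; exact Measure.isProbabilityMeasure_map (hX 0).aemeasurable
  have : IsProbabilityMeasure (Measure.map Z μ) :=
    Measure.isProbabilityMeasure_map hZm.aemeasurable
  have hind : IndepFun Z (X k) μ := by
    have hk' : Measurable (fun f : (({k} : Finset ℕ) → S) => f ⟨k, by simp⟩) :=
      measurable_pi_apply _
    exact (hindep.indepFun_finset T {k} (by simpa using hk) hX).comp measurable_id hk'
  have hmap := (indepFun_iff_map_prod_eq_prod_map_map hZm.aemeasurable (hX k).aemeasurable).1 hind
  rw [hν k] at hmap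
  let F : (T → S) × S → ℝ := fun p => g p.1 * D (p.1 ⟨i, hi⟩) p.2
  have hF : Measurable F := by
    refine (hg.comp measurable_fst).mul (hD.comp (Measurable.prodMk ?_ measurable_snd))
    exact (measurable_pi_apply _).comp measurable_fst
  have hp : Measurable (fun ω => (Z ω, X k ω)) := hZm.prodMk (hX k)
  have hFi : Integrable F ((Measure.map Z μ).prod ν) := by
    rw [← hmap, integrable_map_measure hF.aestronglyMeasurable hp.aemeasurable]
    exact hint
  have : ∫ ω, (g ∘ Z) ω * D (X i ω) (X k ω) ∂μ = ∫ p, F p ∂((Measure.map Z μ).prod ν) := by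
    rw [← hmap, integral_map hp.aemeasurable hF.aestronglyMeasurable]
    rfl
  rw [this, integral_prod _ hFi, integral_eq_zero_of_ae]
  have hz' : ∀ᵐ z ∂(Measure.map Z μ), ∫ y, D (z ⟨i, hi⟩) y ∂ν = 0 := by
    have q : Measure.map (fun z : T → S => z ⟨i, hi⟩) (Measure.map Z μ) = ν := by
      rw [Measure.map_map (measurable_pi_apply _) hZm]
      exact hν i
    rw [← q] at hz
    have := ae_of_ae_map (measurable_pi_apply _).aemeasurable hz
    rwa [q] at this
  filter_upwards [hz'] with z hz
  simp only [F, integral_const_mul, hz, mul_zero, Pi.zero_apply]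

lemma main_bound {Ω : Type*} [mΩ : MeasurableSpace Ω] (μ : Measure Ω) [IsProbabilityMeasure μ]
    {S : Type*} [MeasurableSpace S]
    (X : ℕ → Ω → S) (hX : ∀ i, Measurable (X i)) (hindep : iIndepFun X μ)
    (ν : Measure S) [IsProbabilityMeasure ν] (hν : ∀ i, Measure.map (X i) μ = ν)
    (Δ : S → S → ℝ) (hΔm : Measurable (Function.uncurry Δ)) (hsymm : ∀ x y, Δ x y = Δ y x)
    (hΔ : MemLp (fun z : S × S => Δ z.1 z.2) 2 (ν.prod ν))
    (hz : ∀ᵐ x ∂ν, ∫ y, Δ x y ∂ν = 0) (n : ℕ) :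
    Integrable (fun ω => Mx (fun j => ∑ i ∈ Finset.range j, Δ (X i ω) (X j ω)) n ^ 2) μ ∧
    ∫ ω, Mx (fun j => ∑ i ∈ Finset.range j, Δ (X i ω) (X j ω)) n ^ 2 ∂μ ≤
      4 * ((∫ z : S × S, Δ z.1 z.2 ^ 2 ∂(ν.prod ν)) * ∑ j ∈ Finset.range n, 1 / ((j : ℝ) + 1)) := by
  set σ2 := ∫ z : S × S, Δ z.1 z.2 ^ 2 ∂(ν.prod ν) with hσ2
  have hσ0 : 0 ≤ σ2 := integral_nonneg fun _ => sq_nonneg _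
  have hpair : ∀ i k, i ≠ k → MeasurePreserving (fun ω => (X i ω, X k ω)) μ (ν.prod ν) := by
    intro i k hik
    refine ⟨(hX i).prodMk (hX k), ?_⟩
    rw [(indepFun_iff_map_prod_eq_prod_map_map (hX i).aemeasurable (hX k).aemeasurable).1
      (hindep.indepFun hik), hν, hν]
  have hΔL : ∀ i k, i ≠ k → MemLp (fun ω => Δ (X i ω) (X k ω)) 2 μ := fun i k hik =>
    hΔ.comp_measurePreserving (hpair i k hik)
  set D : ℕ → Ω → ℝ := fun j ω => ∑ i ∈ Finset.range j, Δ (X i ω) (X j ω) with hDdef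
  have hDL : ∀ j, MemLp (D j) 2 μ := fun j =>
    memLp_finsetSum _ fun i hi => hΔL i j (Finset.mem_range.mp hi).ne
  let F : Finset ℕ → MeasurableSpace Ω := fun T =>
    MeasurableSpace.comap (fun ω (j : T) => X j ω) inferInstance
  have hFle : ∀ T, F T ≤ mΩ := by
    intro T
    have hZ : Measurable (fun ω (j : T) => X j ω) := measurable_pi_lambda _ fun j => hX j
    exact hZ.comap_le
  have hXF : ∀ (T : Finset ℕ) i, i ∈ T → Measurable[F T] (X i) := by
    intro T i hi
    exact (measurable_pi_apply (⟨i, hi⟩ : T)).comp (comap_measurable (fun ω (j : T) => X j ω))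
  have hΔF : ∀ (T : Finset ℕ) i k, i ∈ T → k ∈ T →
      Measurable[F T] (fun ω => Δ (X i ω) (X k ω)) := by
    intro T i k hi hk
    exact hΔm.comp (Measurable.prodMk (hXF T i hi) (hXF T k hk))
  have hDF : ∀ k j, j < k → Measurable[F (Finset.range k)] (D j) := by
    intro k j hj
    refine Finset.measurable_fun_sum _ fun i hi => hΔF _ i j ?_ ?_
    · exact Finset.mem_range.mpr ((Finset.mem_range.mp hi).trans hj)
    · exact Finset.mem_range.mpr hj
  have hYF : ∀ k l, l ≤ k → Measurable[F (Finset.range k)] (fun ω => Yd (fun j => D j ω) l) := by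
    intro k l hl
    refine Finset.measurable_fun_sum _ fun i hi => ?_
    exact (hDF k i ((Finset.mem_range.mp hi).trans_le hl)).div_const _
  have hMF : ∀ k l, l ≤ k → Measurable[F (Finset.range k)] (fun ω => Mx (fun j => D j ω) l) := by
    intro k l
    induction l with
    | zero => intro _; exact measurable_const
    | succ l ih =>
      intro hl
      have h1 := ih (by omega)
      have h2 := hYF k (l + 1) hl
      exact h1.max (measurable_abs.comp h2)
  have hCF : ∀ k, Measurable[F (Finset.range k)] (fun ω => Cc (fun j => D j ω) k) := by
    intro k
    refine Measurable.ite ?_ (hMF k k le_rfl) (hMF k k le_rfl).neg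
    exact (hYF k k le_rfl) measurableSet_Ici
  have hYL : ∀ l, MemLp (fun ω => Yd (fun j => D j ω) l) 2 μ := by
    intro l
    refine memLp_finsetSum _ fun i hi => ?_
    simp_rw [div_eq_mul_inv]
    exact (hDL i).mul_const _
  have hML : ∀ l, MemLp (fun ω => Mx (fun j => D j ω) l) 2 μ := by
    intro l
    induction l with
    | zero => exact memLp_const 0
    | succ l ih => exact ih.sup (hYL (l + 1)).abs
  have hCL : ∀ l, MemLp (fun ω => Cc (fun j => D j ω) l) 2 μ := by
    intro l
    refine (hML l).of_le ((hCF l).mono (hFle _) le_rfl).aestronglyMeasurable ?_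
    refine Filter.Eventually.of_forall fun ω => ?_
    rw [Real.norm_eq_abs, abs_Cc]
    exact le_abs_self _
  have horth : ∀ k (G : Ω → ℝ), Measurable[F (Finset.range k)] G → MemLp G 2 μ →
      ∫ ω, G ω * D k ω ∂μ = 0 := by
    intro k G hG hGL
    simp only [hDdef, Finset.mul_sum]
    have hi : ∀ i ∈ Finset.range k, Integrable (fun ω => G ω * Δ (X i ω) (X k ω)) μ :=
      fun i hi => hGL.integrable_mul (hΔL i k (Finset.mem_range.mp hi).ne)
    rw [integral_finsetSum _ hi]
    exact Finset.sum_eq_zero fun i hik => orth μ X hX hindep ν hν Δ hΔm hz (Finset.range k) i k hik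
      (by simp) G hG (hi i hik)
  have hDD : ∀ k, ∫ ω, D k ω ^ 2 ∂μ = k * σ2 := by
    intro k
    have e : ∀ ω, D k ω ^ 2 = ∑ a ∈ Finset.range k, ∑ b ∈ Finset.range k,
        Δ (X a ω) (X k ω) * Δ (X b ω) (X k ω) := by
      intro ω
      rw [sq, Finset.sum_mul_sum]
    have hi : ∀ a ∈ Finset.range k, ∀ b ∈ Finset.range k,
        Integrable (fun ω => Δ (X a ω) (X k ω) * Δ (X b ω) (X k ω)) μ := fun a ha b hb =>
      (hΔL a k (Finset.mem_range.mp ha).ne).integrable_mul (hΔL b k (Finset.mem_range.mp hb).ne)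
    simp_rw [e]
    rw [integral_finsetSum _ fun a ha => integrable_finsetSum _ fun b hb => hi a ha b hb]
    have : ∀ a ∈ Finset.range k, ∫ ω, ∑ b ∈ Finset.range k,
        Δ (X a ω) (X k ω) * Δ (X b ω) (X k ω) ∂μ = σ2 := by
      intro a ha
      rw [integral_finsetSum _ fun b hb => hi a ha b hb, Finset.sum_eq_single_of_mem a ha]
      · have hp := hpair a k (Finset.mem_range.mp ha).ne
        have hm2 : Measurable (fun z : S × S => Δ z.1 z.2 ^ 2) := hΔm.pow_const 2
        rw [hσ2, ← hp.map_eq, integral_map hp.measurable.aemeasurable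
          hm2.aestronglyMeasurable]
        congr 1
        ext ω
        ring
      · intro b hb hba
        have hbk := (Finset.mem_range.mp hb).ne
        have hi' := hi a ha b hb
        simp_rw [fun ω => hsymm (X b ω) (X k ω)] at hi' ⊢
        refine orth μ X hX hindep ν hν Δ hΔm hz {a, k} k b (by simp) (by simp [hba, hbk])
          (fun ω => Δ (X a ω) (X k ω)) (hΔF _ a k (by simp) (by simp)) hi'
    rw [Finset.sum_congr rfl this]
    simp
  have hYY : ∀ l, ∫ ω, Yd (fun j => D j ω) l ^ 2 ∂μ
      ≤ σ2 * ∑ j ∈ Finset.range l, 1 / ((j : ℝ) + 1) := by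
    intro l
    induction l with
    | zero => simp [Yd]
    | succ l ih =>
      have e : ∀ ω, Yd (fun j => D j ω) (l + 1) ^ 2 = Yd (fun j => D j ω) l ^ 2
          + (2 / ((l : ℝ) + 1)) * (Yd (fun j => D j ω) l * D l ω)
          + (1 / ((l : ℝ) + 1) ^ 2) * D l ω ^ 2 := by
        intro ω
        rw [Yd_succ]
        have : (l : ℝ) + 1 ≠ 0 := by positivity
        field_simp
        ring
      simp_rw [e]
      have i1 := (hYL l).integrable_sq
      have i2 : Integrable (fun ω => (2 / ((l : ℝ) + 1)) * (Yd (fun j => D j ω) l * D l ω)) μ :=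
        ((hYL l).integrable_mul (hDL l)).const_mul _
      have i3 : Integrable (fun ω => (1 / ((l : ℝ) + 1) ^ 2) * D l ω ^ 2) μ :=
        ((hDL l).integrable_sq).const_mul _
      rw [integral_add ?_ i3, integral_add i1 i2, integral_const_mul, integral_const_mul,
        horth l _ (hYF l l le_rfl) (hYL l), hDD, Finset.sum_range_succ, mul_add]
      · have : 1 / ((l : ℝ) + 1) ^ 2 * (l * σ2) ≤ σ2 * (1 / ((l : ℝ) + 1)) := by
          have h1 : 1 / ((l : ℝ) + 1) ^ 2 * l ≤ 1 / ((l : ℝ) + 1) := by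
            rw [div_mul_eq_mul_div, div_le_div_iff₀ (by positivity) (by positivity)]
            nlinarith [(Nat.cast_nonneg l : (0 : ℝ) ≤ l)]
          nlinarith [mul_le_mul_of_nonneg_left h1 hσ0]
        linarith
      · exact i1.add i2
  refine ⟨(hML n).integrable_sq, ?_⟩
  have hci : ∀ k, Integrable (fun ω => Cc (fun j => D j ω) k * (D k ω / ((k : ℝ) + 1))) μ := by
    intro k
    have : Integrable (fun ω => Cc (fun j => D j ω) k * D k ω / ((k : ℝ) + 1)) μ :=
      ((hCL k).integrable_mul (hDL k)).div_const _
    simpa only [mul_div_assoc] using this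
  have hcz : ∀ k, ∫ ω, Cc (fun j => D j ω) k * (D k ω / ((k : ℝ) + 1)) ∂μ = 0 := by
    intro k
    simp_rw [← mul_div_assoc]
    rw [integral_div, horth k _ (hCF k) (hCL k), zero_div]
  have iy : Integrable (fun ω => 4 * Yd (fun j => D j ω) n ^ 2) μ :=
    (hYL n).integrable_sq.const_mul 4
  have ic : Integrable (fun ω => 4 * ∑ k ∈ Finset.range n,
      Cc (fun j => D j ω) k * (D k ω / ((k : ℝ) + 1))) μ :=
    (integrable_finsetSum _ fun k _ => hci k).const_mul 4
  calc ∫ ω, Mx (fun j => D j ω) n ^ 2 ∂μ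
      ≤ ∫ ω, (4 * Yd (fun j => D j ω) n ^ 2 - 4 * ∑ k ∈ Finset.range n,
        Cc (fun j => D j ω) k * (D k ω / ((k : ℝ) + 1))) ∂μ :=
        integral_mono (hML n).integrable_sq (iy.sub ic) fun ω => pathwise' _ n
    _ = 4 * ∫ ω, Yd (fun j => D j ω) n ^ 2 ∂μ := by
        rw [integral_sub iy ic, integral_const_mul, integral_const_mul,
          integral_finsetSum _ fun k _ => hci k]
        simp [hcz]
    _ ≤ _ := by linarith [hYY n]



/-- With `Δ(x,y) = h(x,y) − w(x) − w(y)` and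
`S_l = Σ_{0 ≤ i < j < l} Δ(X_i, X_j)`, for every `n ≥ 1`,
`E[(max_{1≤l≤n} l⁻¹|S_l|)²] ≤ 16 (σ_h² − 2σ_w²) Σ_{i=1}^n i⁻¹`, and consequently
`E[(max_{1≤l≤n} l⁻¹|S_l|)²] ≤ 16 (σ_h² − 2σ_w²) log(3n)`. -/
theorem stmt_9 {Ω : Type*} [MeasureSpace Ω] [IsProbabilityMeasure (ℙ : Measure Ω)]
    {S : Type*} [MeasurableSpace S]
    (X : ℕ → Ω → S) (hXmeas : ∀ i, Measurable (X i))
    (hindep : iIndepFun X ℙ)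
    (hident : ∀ i, Measure.map (X i) ℙ = Measure.map (X 0) ℙ)
    (h : S → S → ℝ) (hmeas : Measurable (Function.uncurry h))
    (hsymm : ∀ x y, h x y = h y x)
    (hmean : (∫ ω, h (X 0 ω) (X 1 ω) ∂ℙ) = 0)
    (hL2 : Integrable (fun ω => (h (X 0 ω) (X 1 ω)) ^ 2) ℙ)
    (w : S → ℝ) (hw : ∀ x, w x = ∫ ω, h (X 0 ω) x ∂ℙ)
    (Sproc : ℕ → Ω → ℝ)
    (hS : ∀ l ω, Sproc l ω = ∑ j ∈ Finset.range l, ∑ i ∈ Finset.range j,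
      (h (X i ω) (X j ω) - w (X i ω) - w (X j ω)))
    (n : ℕ) (hn : 1 ≤ n) :
    (∫ ω, ((Finset.Icc 1 n).sup' (Finset.nonempty_Icc.mpr hn)
        (fun l => |Sproc l ω| / l)) ^ 2 ∂ℙ)
      ≤ 16 * ((∫ ω, (h (X 0 ω) (X 1 ω)) ^ 2 ∂ℙ) - 2 * variance (fun ω => w (X 0 ω)) ℙ) *
          (∑ i ∈ Finset.Icc 1 n, (1 : ℝ) / i) ∧
    (∫ ω, ((Finset.Icc 1 n).sup' (Finset.nonempty_Icc.mpr hn)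
        (fun l => |Sproc l ω| / l)) ^ 2 ∂ℙ)
      ≤ 16 * ((∫ ω, (h (X 0 ω) (X 1 ω)) ^ 2 ∂ℙ) - 2 * variance (fun ω => w (X 0 ω)) ℙ) *
          Real.log (3 * n) := by
  set ν := Measure.map (X 0) ℙ with hν
  have : IsProbabilityMeasure ν := Measure.isProbabilityMeasure_map (hXmeas 0).aemeasurable
  have hp : Measure.map (fun ω => (X 0 ω, X 1 ω)) ℙ = ν.prod ν := by
    rw [(indepFun_iff_map_prod_eq_prod_map_map (hXmeas 0).aemeasurable
      (hXmeas 1).aemeasurable).1 (hindep.indepFun (by norm_num)), hident 1]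
  have hpm : Measurable (fun ω => (X 0 ω, X 1 ω)) := (hXmeas 0).prodMk (hXmeas 1)
  have hm2 : Measurable (fun z : S × S => h z.1 z.2) := hmeas
  have hmean' : ∫ z, h z.1 z.2 ∂(ν.prod ν) = 0 := by
    rw [← hp, integral_map hpm.aemeasurable hm2.aestronglyMeasurable]
    exact hmean
  have hL2' : Integrable (fun z : S × S => h z.1 z.2 ^ 2) (ν.prod ν) := by
    rw [← hp, integrable_map_measure (hm2.pow_const 2).aestronglyMeasurable hpm.aemeasurable]
    exact hL2
  have hsq : ∫ z : S × S, h z.1 z.2 ^ 2 ∂(ν.prod ν) = ∫ ω, (h (X 0 ω) (X 1 ω)) ^ 2 ∂ℙ := by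
    rw [← hp, integral_map hpm.aemeasurable (hm2.pow_const 2).aestronglyMeasurable]
  have hw' : ∀ x, w x = ∫ y, h y x ∂ν := by
    intro x
    have hmx : Measurable (fun y => h y x) := hmeas.comp measurable_prodMk_right
    rw [hw, hν, integral_map (hXmeas 0).aemeasurable hmx.aestronglyMeasurable]
  obtain ⟨hwm, hΔL, hz, hvar⟩ := kernel_facts ν h hmeas hsymm hmean' hL2' w hw'
  have hvw : variance w ν = variance (fun ω => w (X 0 ω)) ℙ := by
    rw [hν, variance_map hwm.aemeasurable (hXmeas 0).aemeasurable]
    rfl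
  rw [hsq, hvw] at hvar
  have hΔm : Measurable (Function.uncurry fun x y => h x y - w x - w y) :=
    (hm2.sub (hwm.comp measurable_fst)).sub (hwm.comp measurable_snd)
  obtain ⟨hMi, hMb⟩ := main_bound ℙ X hXmeas hindep ν hident (fun x y => h x y - w x - w y) hΔm
    (fun x y => by rw [hsymm x y]; ring) hΔL hz n
  have hσ0 : 0 ≤ ∫ z : S × S, (h z.1 z.2 - w z.1 - w z.2) ^ 2 ∂(ν.prod ν) :=
    integral_nonneg fun _ => sq_nonneg _
  rw [hvar] at hMb hσ0
  have hsum : ∑ j ∈ Finset.range n, 1 / ((j : ℝ) + 1) = ∑ i ∈ Finset.Icc 1 n, (1 : ℝ) / i := by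
    have := Finset.sum_Ico_add' (fun i : ℕ => (1 : ℝ) / i) 0 n 1
    rw [Finset.range_eq_Ico]
    push_cast at this
    rw [this]
    rfl
  have hmain : (∫ ω, ((Finset.Icc 1 n).sup' (Finset.nonempty_Icc.mpr hn)
        (fun l => |Sproc l ω| / l)) ^ 2 ∂ℙ)
      ≤ 16 * ((∫ ω, (h (X 0 ω) (X 1 ω)) ^ 2 ∂ℙ) - 2 * variance (fun ω => w (X 0 ω)) ℙ) *
          (∑ i ∈ Finset.Icc 1 n, (1 : ℝ) / i) := by
    rw [hsum] at hMb
    have : (∫ ω, ((Finset.Icc 1 n).sup' (Finset.nonempty_Icc.mpr hn)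
        (fun l => |Sproc l ω| / l)) ^ 2 ∂ℙ) ≤ ∫ ω, 4 * Mx (fun j => ∑ i ∈ Finset.range j,
          (h (X i ω) (X j ω) - w (X i ω) - w (X j ω))) n ^ 2 ∂ℙ := by
      refine integral_mono_of_nonneg (Filter.Eventually.of_forall fun _ => sq_nonneg _)
        (hMi.const_mul 4) (Filter.Eventually.of_forall fun ω => ?_)
      have h1 : (Finset.Icc 1 n).sup' (Finset.nonempty_Icc.mpr hn) (fun l => |Sproc l ω| / l)
          ≤ 2 * Mx (fun j => ∑ i ∈ Finset.range j,
          (h (X i ω) (X j ω) - w (X i ω) - w (X j ω))) n := by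
        refine Finset.sup'_le _ _ fun l hl => ?_
        rw [hS]
        exact abs_sum_div_le _ l n (Finset.mem_Icc.mp hl).1 (Finset.mem_Icc.mp hl).2
      have h0 : 0 ≤ (Finset.Icc 1 n).sup' (Finset.nonempty_Icc.mpr hn)
          (fun l => |Sproc l ω| / l) :=
        le_trans (by positivity) (Finset.le_sup' (fun l : ℕ => |Sproc l ω| / l)
          (Finset.mem_Icc.mpr ⟨le_rfl, hn⟩))
      have h2 := pow_le_pow_left₀ h0 h1 2
      simp only
      linarith
    rw [integral_const_mul] at this
    linarith
  refine ⟨hmain, hmain.trans (mul_le_mul_of_nonneg_left ?_ (by linarith))⟩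
  have h3 : (1 : ℝ) ≤ Real.log 3 := by
    rw [Real.le_log_iff_exp_le (by norm_num)]
    linarith [Real.exp_one_lt_d9]
  have hn' : (n : ℝ) ≠ 0 := by positivity
  have hh := harmonic_le_one_add_log n
  rw [harmonic_eq_sum_Icc] at hh
  push_cast at hh
  rw [Real.log_mul (by norm_num) hn']
  simp only [one_div]
  linarith
end

section
/- Let Z₁,…,Z_n be i.i.d. standard normal random variables. Then E[(max_{1≤l≤n} (l+1)^{−1}|Σ_{i=1}^l Z_i|)²] ≤ 16 Σ_{i=1}^n i^{−2}; in particular this quantity is at most 8π²/3. -/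
open MeasureTheory ProbabilityTheory

noncomputable section DoobAux

/-- The weighted partial sums `Σ_{i<k} z_i/(i+1)`. -/
def auxT (z : ℕ → ℝ) : ℕ → ℝ
  | 0 => 0
  | k + 1 => auxT z k + z k / (k + 1)

/-- Running maximum of `|auxT|`. -/
def auxM (z : ℕ → ℝ) : ℕ → ℝ
  | 0 => 0
  | k + 1 => max (auxM z k) |auxT z (k + 1)|

/-- A sign function. -/
def auxS (x : ℝ) : ℝ := if 0 ≤ x then 1 else -1

/-- Predictable integrand. -/
def auxK (z : ℕ → ℝ) (k : ℕ) : ℝ := 8 * auxT z k - 4 * (auxS (auxT z k) * auxM z k)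

/-- Pathwise upper bound for the squared maximum. -/
def auxD (z : ℕ → ℝ) (n : ℕ) : ℝ :=
  ∑ j ∈ Finset.range n, (auxK z j * z j * (1 / ((j : ℝ) + 1)) + z j ^ 2 * (4 / ((j : ℝ) + 1) ^ 2))

lemma auxM_nonneg (z : ℕ → ℝ) (k : ℕ) : 0 ≤ auxM z k := by
  induction k with
  | zero => simp [auxM]
  | succ k ih => exact le_max_of_le_left ih

lemma auxM_mono (z : ℕ → ℝ) : Monotone (auxM z) :=
  monotone_nat_of_le_succ fun k => le_max_left _ _

lemma abs_auxT_le (z : ℕ → ℝ) (k : ℕ) : |auxT z k| ≤ auxM z k := by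
  cases k with
  | zero => simp [auxT, auxM]
  | succ k => exact le_max_right _ _

lemma auxS_mul_self (x : ℝ) : auxS x * x = |x| := by
  unfold auxS
  split_ifs with h
  · rw [abs_of_nonneg h, one_mul]
  · rw [abs_of_neg (not_le.mp h)]; ring

lemma auxS_mul_le (x y : ℝ) : auxS x * y ≤ |y| := by
  unfold auxS
  split_ifs with h
  · rw [one_mul]; exact le_abs_self y
  · have := neg_abs_le y
    linarith

lemma abs_auxS (x : ℝ) : |auxS x| = 1 := by
  unfold auxS
  split_ifs <;> simp

lemma auxD_ge (z : ℕ → ℝ) (n : ℕ) :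
    4 * |auxT z n| ^ 2 + 2 * auxM z n ^ 2 - 4 * |auxT z n| * auxM z n ≤ auxD z n := by
  induction n with
  | zero => simp [auxT, auxM, auxD]
  | succ k ih =>
    have hk : (0 : ℝ) < (k : ℝ) + 1 := by positivity
    have hD : auxD z (k + 1) = auxD z k + 4 * |auxT z (k+1)| ^ 2 - 4 * |auxT z k| ^ 2
        - 4 * auxM z k * (auxS (auxT z k) * auxT z (k+1) - auxS (auxT z k) * auxT z k) := by
      rw [auxD, Finset.sum_range_succ, ← auxD, sq_abs, sq_abs, auxT, auxK]
      field_simp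
      ring
    rw [hD, auxS_mul_self]
    have h1 := auxS_mul_le (auxT z k) (auxT z (k+1))
    have h2 := mul_le_mul_of_nonneg_left h1 (auxM_nonneg z k)
    have h3 : 2 * auxM z (k+1) ^ 2 - 4 * |auxT z (k+1)| * auxM z (k+1) ≤
        2 * auxM z k ^ 2 - 4 * |auxT z (k+1)| * auxM z k := by
      rw [auxM]
      rcases max_cases (auxM z k) |auxT z (k+1)| with ⟨h, _⟩ | ⟨h, _⟩
      · rw [h]
      · rw [h]; nlinarith [sq_nonneg (auxM z k - |auxT z (k+1)|)]
    nlinarith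

lemma auxM_sq_le (z : ℕ → ℝ) (n : ℕ) : auxM z n ^ 2 ≤ auxD z n := by
  nlinarith [auxD_ge z n, sq_nonneg (2 * |auxT z n| - auxM z n)]

lemma sum_sub_le (z : ℕ → ℝ) (l : ℕ) :
    |∑ i ∈ Finset.range l, z i - l * auxT z l| ≤ l * auxM z l := by
  induction l with
  | zero => simp
  | succ l ih =>
    have hk : (0 : ℝ) < (l : ℝ) + 1 := by positivity
    have e : ∑ i ∈ Finset.range (l+1), z i - (l+1 : ℕ) * auxT z (l+1)
        = (∑ i ∈ Finset.range l, z i - l * auxT z l) - auxT z l := by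
      rw [Finset.sum_range_succ, auxT]
      push_cast
      field_simp
      ring
    rw [e]
    refine (abs_sub _ _).trans ?_
    have h1 := abs_auxT_le z l
    have h2 : auxM z l ≤ auxM z (l+1) := auxM_mono z (Nat.le_succ l)
    push_cast
    have h3 := mul_le_mul_of_nonneg_left h2 (Nat.cast_nonneg (α := ℝ) l)
    nlinarith

lemma sum_div_le (z : ℕ → ℝ) (l : ℕ) :
    |∑ i ∈ Finset.range l, z i| / (l + 1) ≤ 2 * auxM z l := by
  have hk : (0 : ℝ) < (l : ℝ) + 1 := by positivity
  rw [div_le_iff₀ hk]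
  have h := sum_sub_le z l
  have h1 := abs_auxT_le z l
  have h2 := auxM_nonneg z l
  have h3 : |∑ i ∈ Finset.range l, z i| ≤
      |∑ i ∈ Finset.range l, z i - l * auxT z l| + |l * auxT z l| := by
    have := abs_add_le (∑ i ∈ Finset.range l, z i - l * auxT z l) (l * auxT z l)
    simpa using this
  rw [abs_mul, Nat.abs_cast] at h3
  have h4 := mul_le_mul_of_nonneg_left h1 (Nat.cast_nonneg (α := ℝ) l)
  nlinarith

lemma measurable_auxS : Measurable auxS :=
  Measurable.ite measurableSet_Ici measurable_const measurable_const

section meas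
variable {Ω : Type*}

lemma measurable_auxT (m : MeasurableSpace Ω) (Z : ℕ → Ω → ℝ) (k : ℕ)
    (h : ∀ j < k, Measurable[m] (Z j)) : Measurable[m] (fun ω => auxT (fun i => Z i ω) k) := by
  induction k with
  | zero => exact measurable_const
  | succ k ih =>
    exact (ih fun j hj => h j (by omega)).add ((h k (by omega)).div_const _)

lemma measurable_auxM (m : MeasurableSpace Ω) (Z : ℕ → Ω → ℝ) (k : ℕ)
    (h : ∀ j < k, Measurable[m] (Z j)) : Measurable[m] (fun ω => auxM (fun i => Z i ω) k) := by
  induction k with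
  | zero => exact measurable_const
  | succ k ih =>
    have h1 := ih fun j hj => h j (by omega)
    have h2 := measurable_auxT m Z (k+1) h
    exact h1.max (measurable_abs.comp h2)

lemma measurable_auxK (m : MeasurableSpace Ω) (Z : ℕ → Ω → ℝ) (k : ℕ)
    (h : ∀ j < k, Measurable[m] (Z j)) : Measurable[m] (fun ω => auxK (fun i => Z i ω) k) := by
  have h1 := measurable_auxM m Z k h
  have h2 := measurable_auxT m Z k h
  exact (h2.const_mul 8).sub (((measurable_auxS.comp h2).mul h1).const_mul 4)

lemma memLp_auxT [MeasurableSpace Ω] (μ : Measure Ω) [IsProbabilityMeasure μ]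
    (Z : ℕ → Ω → ℝ) (h : ∀ j, MemLp (Z j) 2 μ) (k : ℕ) :
    MemLp (fun ω => auxT (fun i => Z i ω) k) 2 μ := by
  induction k with
  | zero => exact memLp_const 0
  | succ k ih =>
    have := ih.add ((h k).mul_const (((k:ℝ) + 1)⁻¹))
    exact this

lemma memLp_auxM [MeasurableSpace Ω] (μ : Measure Ω) [IsProbabilityMeasure μ]
    (Z : ℕ → Ω → ℝ) (h : ∀ j, MemLp (Z j) 2 μ) (k : ℕ) :
    MemLp (fun ω => auxM (fun i => Z i ω) k) 2 μ := by
  induction k with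
  | zero => exact memLp_const 0
  | succ k ih => exact ih.sup (memLp_auxT μ Z h (k+1)).abs

lemma memLp_auxK [MeasurableSpace Ω] (μ : Measure Ω) [IsProbabilityMeasure μ]
    (Z : ℕ → Ω → ℝ) (hm : ∀ j, Measurable (Z j)) (h : ∀ j, MemLp (Z j) 2 μ) (k : ℕ) :
    MemLp (fun ω => auxK (fun i => Z i ω) k) 2 μ := by
  have h1 := memLp_auxM μ Z h k
  have h2 := memLp_auxT μ Z h k
  have h3 : MemLp (fun ω => auxS (auxT (fun i => Z i ω) k) * auxM (fun i => Z i ω) k) 2 μ := by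
    refine h1.mono ?_ (Filter.Eventually.of_forall fun ω => ?_)
    · exact ((measurable_auxS.comp (measurable_auxT _ Z k fun j _ => hm j)).mul
        (measurable_auxM _ Z k fun j _ => hm j)).aestronglyMeasurable
    · rw [norm_mul, Real.norm_eq_abs, abs_auxS, one_mul]
  exact (h2.const_mul 8).sub (h3.const_mul 4)

lemma integral_auxK_mul [MeasurableSpace Ω] (μ : Measure Ω) [IsProbabilityMeasure μ]
    (Z : ℕ → Ω → ℝ) (hm : ∀ j, Measurable (Z j)) 
    (hindep : iIndepFun Z μ) (h0 : ∀ j, ∫ ω, Z j ω ∂μ = 0) (k : ℕ) :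
    ∫ ω, auxK (fun i => Z i ω) k * Z k ω ∂μ = 0 := by
  have key : Indep (⨆ j ∈ {j | j < k}, MeasurableSpace.comap (Z j) inferInstance)
      (⨆ j ∈ ({k} : Set ℕ), MeasurableSpace.comap (Z j) inferInstance) μ :=
    indep_iSup_of_disjoint (fun j => (hm j).comap_le) hindep (by simp)
  rw [iSup_singleton] at key
  have hI : IndepFun (fun ω => auxK (fun i => Z i ω) k) (Z k) μ := by
    rw [IndepFun_iff_Indep]
    refine indep_of_indep_of_le_left key ?_
    refine Measurable.comap_le (measurable_auxK _ Z k fun j hj => ?_)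
    exact measurable_iff_comap_le.2 (le_iSup₂_of_le j hj le_rfl)
  rw [hI.integral_fun_mul_eq_mul_integral
    (measurable_auxK _ Z k fun j _ => hm j).aestronglyMeasurable (hm k).aestronglyMeasurable, h0,
    mul_zero]

lemma auxD_integral [MeasurableSpace Ω] (μ : Measure Ω) [IsProbabilityMeasure μ]
    (Z : ℕ → Ω → ℝ) (hm : ∀ j, Measurable (Z j)) (h : ∀ j, MemLp (Z j) 2 μ)
    (hindep : iIndepFun Z μ) (h0 : ∀ j, ∫ ω, Z j ω ∂μ = 0)
    (h1 : ∀ j, ∫ ω, Z j ω ^ 2 ∂μ = 1) (n : ℕ) :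
    Integrable (fun ω => auxD (fun i => Z i ω) n) μ ∧
    ∫ ω, auxD (fun i => Z i ω) n ∂μ = 4 * ∑ i ∈ Finset.Icc 1 n, (1 : ℝ) / (i : ℝ) ^ 2 := by
  have hi1 : ∀ j : ℕ, Integrable
      (fun ω => auxK (fun i => Z i ω) j * Z j ω * (1 / ((j : ℝ) + 1))) μ := fun j =>
    ((memLp_auxK μ Z hm h j).integrable_mul (h j)).mul_const _
  have hi2 : ∀ j : ℕ, Integrable (fun ω => Z j ω ^ 2 * (4 / ((j : ℝ) + 1) ^ 2)) μ := fun j =>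
    (h j).integrable_sq.mul_const _
  unfold auxD
  refine ⟨integrable_finsetSum _ fun j _ => (hi1 j).add (hi2 j), ?_⟩
  have e := integral_finsetSum (μ := μ) (f := fun (j : ℕ) ω =>
    auxK (fun i => Z i ω) j * Z j ω * (1 / ((j : ℝ) + 1)) + Z j ω ^ 2 * (4 / ((j : ℝ) + 1) ^ 2))
    (Finset.range n) fun j _ => (hi1 j).add (hi2 j)
  refine e.trans ?_
  rw [← Finset.Ico_add_one_right_eq_Icc,
    Finset.sum_Ico_eq_sum_range, Finset.mul_sum]
  refine Finset.sum_congr (by simp) fun j _ => ?_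
  rw [integral_add (hi1 j) (hi2 j), integral_mul_const, integral_mul_const,
    integral_auxK_mul μ Z hm hindep h0, h1]
  push_cast
  ring

end meas

end DoobAux



/-- Let `Z₁, …, Z_n` (here `Z 0, …, Z (n-1)`) be i.i.d. standard normal
random variables. Then `E[(max_{1≤l≤n} (l+1)⁻¹ |Σ_{i=1}^l Z_i|)²] ≤ 16 Σ_{i=1}^n i⁻²`;
in particular this quantity is at most `8π²/3`. -/
theorem stmt_10 {Ω : Type*} [MeasureSpace Ω] [IsProbabilityMeasure (ℙ : Measure Ω)]
    (Z : ℕ → Ω → ℝ) (hZmeas : ∀ i, Measurable (Z i))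
    (hindep : iIndepFun (m := fun _ : ℕ => (inferInstance : MeasurableSpace ℝ)) Z ℙ)
    (hdist : ∀ i, Measure.map (Z i) ℙ = gaussianReal 0 1)
    (n : ℕ) (hn : 1 ≤ n) :
    (∫ ω, ((Finset.Icc 1 n).sup' (Finset.nonempty_Icc.mpr hn)
        (fun l => |∑ i ∈ Finset.range l, Z i ω| / (l + 1))) ^ 2 ∂ℙ)
      ≤ 16 * ∑ i ∈ Finset.Icc 1 n, (1 : ℝ) / (i : ℝ) ^ 2 ∧
    (∫ ω, ((Finset.Icc 1 n).sup' (Finset.nonempty_Icc.mpr hn)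
        (fun l => |∑ i ∈ Finset.range l, Z i ω| / (l + 1))) ^ 2 ∂ℙ)
      ≤ 8 * Real.pi ^ 2 / 3 := by
  have hmem : ∀ i, MemLp (Z i) 2 ℙ := fun i => by
    have := memLp_id_gaussianReal' (μ := 0) (v := 1) 2 (by simp)
    rw [← hdist i, memLp_map_measure_iff (by fun_prop) (hZmeas i).aemeasurable] at this
    exact this
  have h0 : ∀ i, ∫ ω, Z i ω ∂ℙ = 0 := fun i => by
    have := integral_id_gaussianReal (μ := 0) (v := 1)
    rw [← hdist i, integral_map (hZmeas i).aemeasurable (by fun_prop)] at this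
    exact this
  have h1 : ∀ i, ∫ ω, Z i ω ^ 2 ∂ℙ = 1 := fun i => by
    have h2 := variance_id_gaussianReal (μ := 0) (v := 1)
    rw [← hdist i, variance_id_map (hZmeas i).aemeasurable,
      variance_of_integral_eq_zero (hZmeas i).aemeasurable (h0 i)] at h2
    simpa using h2
  obtain ⟨hDi, hD⟩ := auxD_integral ℙ Z hZmeas hmem hindep h0 h1 n
  have hmain : (∫ ω, ((Finset.Icc 1 n).sup' (Finset.nonempty_Icc.mpr hn)
        (fun l => |∑ i ∈ Finset.range l, Z i ω| / (l + 1))) ^ 2 ∂ℙ)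
      ≤ 16 * ∑ i ∈ Finset.Icc 1 n, (1 : ℝ) / (i : ℝ) ^ 2 := by
    calc _ ≤ ∫ ω, 4 * auxD (fun i => Z i ω) n ∂ℙ := by
          refine integral_mono_of_nonneg (Filter.Eventually.of_forall fun ω => sq_nonneg _)
            (hDi.const_mul 4) (Filter.Eventually.of_forall fun ω => ?_)
          have hle : (Finset.Icc 1 n).sup' (Finset.nonempty_Icc.mpr hn)
              (fun l => |∑ i ∈ Finset.range l, Z i ω| / ((l : ℝ) + 1))
              ≤ 2 * auxM (fun i => Z i ω) n := by
            refine Finset.sup'_le _ _ fun l hl => ?_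
            have := auxM_mono (fun i => Z i ω) (Finset.mem_Icc.mp hl).2
            linarith [sum_div_le (fun i => Z i ω) l]
          have hge : 0 ≤ (Finset.Icc 1 n).sup' (Finset.nonempty_Icc.mpr hn)
              (fun l => |∑ i ∈ Finset.range l, Z i ω| / ((l : ℝ) + 1)) := by
            refine le_trans ?_ (Finset.le_sup' _ (Finset.mem_Icc.mpr ⟨hn, le_rfl⟩))
            positivity
          have h3 := pow_le_pow_left₀ hge hle 2
          have h4 := auxM_sq_le (fun i => Z i ω) n
          dsimp only
          linarith
      _ = _ := by rw [integral_const_mul, hD]; ring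
  refine ⟨hmain, hmain.trans ?_⟩
  have := sum_le_hasSum (Finset.Icc 1 n) (fun i _ => by positivity) hasSum_zeta_two
  linarith
end

section
/- Let X_{i,k} = n^{−1} Σ_{j=1}^n 1[R_{n(i−1)+j,k} ≤ a_k] − π_k for i ≥ 1 and k ∈ {1,…,p}. Then for all i ≥ 1 and all k,l ∈ {1,…,p}, E[X_{i,k} X_{i+1,l}] = n^{−2} Σ_{d=1}^{m−1} d · ( P(R_{1,k} ≤ a_k, R_{d+1,l} ≤ a_l) − π_k π_l ). -/
open MeasureTheory ProbabilityTheory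

lemma aux_comb (m n : ℕ) (hmn : m < n) (c : ℕ → ℝ) (hc : ∀ d, m ≤ d → c d = 0) :
    ∑ j ∈ Finset.Icc 1 n, ∑ j' ∈ Finset.Icc 1 n, c (n + j' - j)
      = ∑ d ∈ Finset.Icc 1 (m - 1), (d : ℝ) * c d := by
  have h1 : ∀ f : ℕ → ℝ, ∑ j ∈ Finset.Icc 1 n, f j = ∑ v ∈ Finset.range n, f (v + 1) := by
    intro f
    rw [Finset.range_eq_Ico, Finset.sum_Ico_add' f 0 n 1]
    rfl
  have h2 : ∑ j ∈ Finset.Icc 1 n, ∑ j' ∈ Finset.Icc 1 n, c (n + j' - j)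
      = ∑ u ∈ Finset.range n, ∑ v ∈ Finset.range n, c (u + v + 1) := by
    rw [h1, ← Finset.sum_range_reflect]
    refine Finset.sum_congr rfl fun u hu => ?_
    rw [h1]
    refine Finset.sum_congr rfl fun v hv => ?_
    rw [Finset.mem_range] at hu hv
    congr 1
    omega
  have h3 : ∑ u ∈ Finset.range n, ∑ v ∈ Finset.range n, c (u + v + 1)
      = ∑ u ∈ Finset.range n, ∑ v ∈ Finset.range (n - u), c (u + v + 1) := by
    refine Finset.sum_congr rfl fun u hu => ?_
    symm
    apply Finset.sum_subset
    · intro x hx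
      rw [Finset.mem_range] at *
      omega
    · intro x hx hx'
      rw [Finset.mem_range] at *
      apply hc
      omega
  rw [h2, h3, ← Finset.sum_range_diag_flip n (fun u v => c (u + v + 1))]
  have h4 : ∀ q ∈ Finset.range n, ∑ k ∈ Finset.range (q + 1), c (k + (q - k) + 1)
      = ((q + 1 : ℕ) : ℝ) * c (q + 1) := by
    intro q _
    rw [Finset.sum_congr rfl (g := fun _ => c (q + 1))]
    · simp
    · intro k hk
      rw [Finset.mem_range] at hk
      congr 1
      omega
  rw [Finset.sum_congr rfl h4, ← h1 (fun d => (d : ℝ) * c d)]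
  symm
  apply Finset.sum_subset
  · intro x hx
    rw [Finset.mem_Icc] at *
    omega
  · intro x hx hx'
    rw [Finset.mem_Icc] at *
    rw [hc x (by omega), mul_zero]

lemma aux_law {Ω : Type*} [MeasurableSpace Ω] (μ : Measure Ω) [IsProbabilityMeasure μ]
    (p : ℕ) (V : ℕ → Ω → (Fin p → ℝ)) (hVmeas : ∀ j, Measurable (V j))
    (hindep : iIndepFun V μ)
    (hident : ∀ j, Measure.map (V j) μ = Measure.map (V 1) μ) (s t : ℕ) :
    Measure.map (fun ω j => V (s + j) ω) μ = Measure.map (fun ω j => V (t + j) ω) μ := by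
  have hp : IsProbabilityMeasure (Measure.map (V 1) μ) :=
    Measure.isProbabilityMeasure_map (hVmeas 1).aemeasurable
  have key : ∀ s : ℕ, Measure.map (fun ω j => V (s + j) ω) μ
      = Measure.infinitePi (fun j => Measure.map (V (s + j)) μ) := by
    intro s
    have h := hindep.precomp (g := fun j => s + j) (add_right_injective s)
    exact (iIndepFun_iff_map_fun_eq_infinitePi_map (fun j => hVmeas _)).1 h
  rw [key s, key t]
  simp only [hident (s + _), hident (t + _)]

lemma aux_joint {Ω : Type*} [MeasurableSpace Ω] (μ : Measure Ω) [IsProbabilityMeasure μ]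
    (p : ℕ) (V : ℕ → Ω → (Fin p → ℝ)) (hVmeas : ∀ j, Measurable (V j))
    (hindep : iIndepFun V μ)
    (hident : ∀ j, Measure.map (V j) μ = Measure.map (V 1) μ) (m s t d : ℕ) (k l : Fin p)
    (x y : ℝ) :
    μ {ω | ∑ r ∈ Finset.range m, V (s + r) ω k ≤ x ∧
        ∑ r ∈ Finset.range m, V (s + d + r) ω l ≤ y}
      = μ {ω | ∑ r ∈ Finset.range m, V (t + r) ω k ≤ x ∧
        ∑ r ∈ Finset.range m, V (t + d + r) ω l ≤ y} := by
  let S : Set (ℕ → Fin p → ℝ) := {z | ∑ r ∈ Finset.range m, z r k ≤ x ∧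
        ∑ r ∈ Finset.range m, z (d + r) l ≤ y}
  have hS : MeasurableSet S := by
    have h1 : Measurable fun z : ℕ → Fin p → ℝ => ∑ r ∈ Finset.range m, z r k := by fun_prop
    have h2 : Measurable fun z : ℕ → Fin p → ℝ => ∑ r ∈ Finset.range m, z (d + r) l := by fun_prop
    exact (measurableSet_le h1 measurable_const).inter (measurableSet_le h2 measurable_const)
  have key : ∀ s : ℕ, μ {ω | ∑ r ∈ Finset.range m, V (s + r) ω k ≤ x ∧
        ∑ r ∈ Finset.range m, V (s + d + r) ω l ≤ y}
        = Measure.map (fun ω j => V (s + j) ω) μ S := by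
    intro s
    rw [Measure.map_apply (measurable_pi_lambda _ fun j => hVmeas _) hS]
    simp [S, add_assoc]
  rw [key s, key t, aux_law μ p V hVmeas hindep hident s t]

lemma aux_indep {Ω : Type*} [MeasurableSpace Ω] (μ : Measure Ω) [IsProbabilityMeasure μ]
    (p : ℕ) (V : ℕ → Ω → (Fin p → ℝ)) (hVmeas : ∀ j, Measurable (V j))
    (hindep : iIndepFun V μ) (m s t : ℕ) (hst : s + m ≤ t) (k l : Fin p) (x y : ℝ) :
    μ {ω | ∑ r ∈ Finset.range m, V (s + r) ω k ≤ x ∧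
        ∑ r ∈ Finset.range m, V (t + r) ω l ≤ y}
      = μ {ω | ∑ r ∈ Finset.range m, V (s + r) ω k ≤ x} *
        μ {ω | ∑ r ∈ Finset.range m, V (t + r) ω l ≤ y} := by
  have hd : Disjoint (Finset.Ico s (s + m)) (Finset.Ico t (t + m)) := by
    rw [Finset.disjoint_left]
    intro z h1 h2
    rw [Finset.mem_Ico] at h1 h2
    omega
  have h := hindep.indepFun_finset _ _ hd hVmeas
  have h' := h.comp (φ := fun z => ∑ i, z i k) (ψ := fun z => ∑ i, z i l)
    (by fun_prop) (by fun_prop)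
  have e : ∀ (s : ℕ) (k : Fin p) (ω : Ω), ∑ r ∈ Finset.range m, V (s + r) ω k
      = ∑ i : Finset.Ico s (s + m), V i ω k := by
    intro s k ω
    rw [Finset.sum_coe_sort (Finset.Ico s (s + m)) (fun i => V i ω k),
      Finset.sum_Ico_eq_sum_range]
    simp
  simp only [e]
  exact h'.measure_inter_preimage_eq_mul (Set.Iic x) (Set.Iic y) measurableSet_Iic measurableSet_Iic

lemma aux_cov {Ω : Type*} [MeasurableSpace Ω] (μ : Measure Ω) [IsProbabilityMeasure μ]
    (A B : Set Ω) (hA : MeasurableSet A) (hB : MeasurableSet B) :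
    ∫ ω, (A.indicator 1 ω - μ.real A) * (B.indicator 1 ω - μ.real B) ∂μ
      = μ.real (A ∩ B) - μ.real A * μ.real B := by
  have e : ∀ ω, (A.indicator (1 : Ω → ℝ) ω - μ.real A) * (B.indicator (1 : Ω → ℝ) ω - μ.real B)
      = (A ∩ B).indicator 1 ω - μ.real B * A.indicator 1 ω - μ.real A * B.indicator 1 ω
        + μ.real A * μ.real B := by
    intro ω
    rw [Set.inter_indicator_one]
    simp only [Pi.mul_apply]
    ring
  have i1 : ∀ C : Set Ω, MeasurableSet C → Integrable (C.indicator (1 : Ω → ℝ)) μ :=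
    fun C hC => (integrable_const (1 : ℝ)).indicator hC
  have hAB := i1 _ (hA.inter hB)
  have hA' := (i1 _ hA).const_mul (μ.real B)
  have hB' := (i1 _ hB).const_mul (μ.real A)
  simp only [e]
  have s1 : Integrable (fun ω => (A ∩ B).indicator (1 : Ω → ℝ) ω - μ.real B * A.indicator 1 ω) μ :=
    hAB.sub hA'
  have s2 : Integrable (fun ω => (A ∩ B).indicator (1 : Ω → ℝ) ω - μ.real B * A.indicator 1 ω
      - μ.real A * B.indicator 1 ω) μ := s1.sub hB'
  rw [integral_add s2 (integrable_const _),
    integral_sub s1 hB', integral_sub hAB hA', integral_const_mul, integral_const_mul,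
    integral_indicator_one hA, integral_indicator_one hB, integral_indicator_one (hA.inter hB)]
  simp
  ring

/-- In the `m`-scans setting, with
`X_{i,k} = n⁻¹ Σ_{j=1}^n 1[R_{n(i−1)+j,k} ≤ a_k] − π_k`, one has for all `i ≥ 1` and all
`k, l`: `E[X_{i,k} X_{i+1,l}] = n⁻² Σ_{d=1}^{m−1} d (P(R_{1,k} ≤ a_k, R_{d+1,l} ≤ a_l) − π_k π_l)`. -/
theorem stmt_12 {Ω : Type*} [MeasureSpace Ω] [IsProbabilityMeasure (ℙ : Measure Ω)]
    (p : ℕ) (V : ℕ → Ω → (Fin p → ℝ)) (hVmeas : ∀ j, Measurable (V j))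
    (hindep : iIndepFun V ℙ)
    (hident : ∀ j, Measure.map (V j) ℙ = Measure.map (V 1) ℙ)
    (m n : ℕ) (hm : 1 ≤ m) (hmn : m < n)
    (a : Fin p → ℝ)
    (R : ℕ → Fin p → Ω → ℝ)
    (hR : ∀ i k ω, R i k ω = ∑ l ∈ Finset.range m, V (i + l) ω k)
    (π : Fin p → ℝ) (hπ : ∀ k, π k = (ℙ {ω | R 1 k ω ≤ a k}).toReal)
    (X : ℕ → Fin p → Ω → ℝ)
    (hX : ∀ i k ω, X i k ω
      = (1 / n : ℝ) * (∑ j ∈ Finset.Icc 1 n,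
          if R (n * (i - 1) + j) k ω ≤ a k then (1 : ℝ) else 0) - π k) :
    ∀ i : ℕ, 1 ≤ i → ∀ k l : Fin p,
      (∫ ω, X i k ω * X (i + 1) l ω ∂ℙ)
        = (1 / (n : ℝ) ^ 2) * ∑ d ∈ Finset.Icc 1 (m - 1), (d : ℝ) *
            ((ℙ {ω | R 1 k ω ≤ a k ∧ R (d + 1) l ω ≤ a l}).toReal - π k * π l) := by
  intro i hi k l
  have hn : (n : ℝ) ≠ 0 := by
    have : n ≠ 0 := by omega
    exact_mod_cast this
  let A : ℕ → Fin p → Set Ω := fun s k => {ω | R s k ω ≤ a k}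
  have hRm : ∀ s k, Measurable (R s k) := by
    intro s k
    have : R s k = fun ω => ∑ l ∈ Finset.range m, V (s + l) ω k := by
      funext ω
      exact hR s k ω
    rw [this]
    exact Finset.measurable_sum _ fun r _ => (measurable_pi_apply k).comp (hVmeas _)
  have hA : ∀ s k, MeasurableSet (A s k) := fun s k =>
    measurableSet_le (hRm s k) measurable_const
  have hJ : ∀ s d k l, (ℙ : Measure Ω) (A s k ∩ A (s + d) l) = ℙ (A 1 k ∩ A (1 + d) l) := by
    intro s d k l
    have := aux_joint (ℙ : Measure Ω) p V hVmeas hindep hident m s 1 d k l (a k) (a l)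
    simp only [← hR] at this
    exact this
  have hP : ∀ s k, (ℙ : Measure Ω).real (A s k) = π k := by
    intro s k
    have := hJ s 0 k k
    simp only [add_zero, Set.inter_self] at this
    rw [hπ, measureReal_def, this]
  have hI : ∀ s t k l, s + m ≤ t → (ℙ : Measure Ω).real (A s k ∩ A t l) = π k * π l := by
    intro s t k l hst
    have := aux_indep (ℙ : Measure Ω) p V hVmeas hindep m s t hst k l (a k) (a l)
    simp only [← hR] at this
    rw [← hP s k, ← hP t l, measureReal_def, measureReal_def, measureReal_def, ← ENNReal.toReal_mul]
    exact congrArg ENNReal.toReal this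
  let c : ℕ → ℝ := fun d => (ℙ : Measure Ω).real (A 1 k ∩ A (1 + d) l) - π k * π l
  have hc : ∀ d, m ≤ d → c d = 0 := by
    intro d hd
    simp only [c]
    rw [hI 1 (1 + d) k l (by omega), sub_self]
  have hX' : ∀ i k ω, X i k ω = (1 / n : ℝ) * ∑ j ∈ Finset.Icc 1 n,
      ((A (n * (i - 1) + j) k).indicator 1 ω - (ℙ : Measure Ω).real (A (n * (i - 1) + j) k)) := by
    intro i k ω
    rw [hX, Finset.sum_sub_distrib]
    simp only [hP]
    rw [Finset.sum_const, Nat.card_Icc, mul_sub]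
    congr 1
    simp
    field_simp
  have hint : ∀ s t, Integrable (fun ω => ((A s k).indicator 1 ω - (ℙ : Measure Ω).real (A s k)) *
      ((A t l).indicator 1 ω - (ℙ : Measure Ω).real (A t l))) (ℙ : Measure Ω) := by
    intro s t
    have i1 : ∀ (C : Set Ω) (r : ℝ), MeasurableSet C →
        MemLp (fun ω => C.indicator (1 : Ω → ℝ) ω - r) 2 (ℙ : Measure Ω) :=
      fun C r hC => ((memLp_const (1 : ℝ)).indicator hC).sub (memLp_const r)
    exact (i1 _ _ (hA s k)).integrable_mul (i1 _ _ (hA t l))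
  have e : ∀ ω, X i k ω * X (i + 1) l ω = (1 / (n : ℝ) ^ 2) *
      ∑ j ∈ Finset.Icc 1 n, ∑ j' ∈ Finset.Icc 1 n,
      (((A (n * (i - 1) + j) k).indicator 1 ω - (ℙ : Measure Ω).real (A (n * (i - 1) + j) k)) *
      ((A (n * (i + 1 - 1) + j') l).indicator 1 ω
        - (ℙ : Measure Ω).real (A (n * (i + 1 - 1) + j') l))) := by
    intro ω
    rw [hX', hX', ← Finset.sum_mul_sum]
    ring
  simp only [e]
  rw [integral_const_mul, integral_finsetSum _ (fun j _ => integrable_finsetSum _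
    (fun j' _ => hint _ _))]
  congr 1
  have hfin := aux_comb m n hmn c hc
  have hR' : ∑ d ∈ Finset.Icc 1 (m - 1), (d : ℝ) *
            ((ℙ {ω | R 1 k ω ≤ a k ∧ R (d + 1) l ω ≤ a l}).toReal - π k * π l)
      = ∑ d ∈ Finset.Icc 1 (m - 1), (d : ℝ) * c d := by
    refine Finset.sum_congr rfl fun d _ => ?_
    simp only [c, add_comm 1 d]
    rfl
  rw [hR', ← hfin]
  refine Finset.sum_congr rfl fun j hj => ?_
  rw [integral_finsetSum _ (fun j' _ => hint _ _)]
  refine Finset.sum_congr rfl fun j' hj' => ?_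
  rw [aux_cov _ _ _ (hA _ _) (hA _ _), hP, hP]
  rw [Finset.mem_Icc] at hj hj'
  obtain ⟨i, rfl⟩ : ∃ q, i = q + 1 := ⟨i - 1, by omega⟩
  have hidx : n * (i + 1 + 1 - 1) + j' = n * (i + 1 - 1) + j + (n + j' - j) := by
    simp only [Nat.add_sub_cancel, Nat.mul_add, mul_one]
    omega
  rw [hidx]
  simp only [c, measureReal_def]
  rw [hJ]
end

section
/- The function f is Fréchet differentiable on C([0,1],ℝ^p), its derivative at w in direction h is Df(w)[h] = η^{−1}(∫₀¹ (c² + |w−s|²(t))^{q/2} dt)^{1/q − 1} ∫₀¹ (c² + |w−s|²(t))^{q/2 − 1} ⟨(w−s)(t), h(t)⟩ dt, and sup_{w} ‖Df(w)‖ ≤ η^{−1}, where ‖Df(w)‖ is the operator norm of the continuous linear functional Df(w). -/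
open MeasureTheory

lemma aux_exists_L {E : Type*} [NormedAddCommGroup E] [NormedSpace ℝ E]
    (D : C(unitInterval, E →L[ℝ] ℝ)) :
    ∃ L : C(unitInterval, E) →L[ℝ] ℝ, ∀ h, L h = ∫ t, D t (h t) := by
  have hint : ∀ h : C(unitInterval, E), Integrable (fun t => D t (h t)) := fun h =>
    (D.continuous.clm_apply h.continuous).integrable_of_hasCompactSupport
      (HasCompactSupport.of_compactSpace _)
  refine ⟨LinearMap.mkContinuous
    { toFun := fun h => ∫ t, D t (h t)
      map_add' := fun a b => ?_
      map_smul' := fun r a => ?_ } ‖D‖ ?_, fun h => rfl⟩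
  · rw [← integral_add (hint a) (hint b)]
    simp
  · simp [integral_const_mul]
  · intro h
    have := norm_integral_le_of_norm_le_const (μ := (volume : Measure unitInterval))
      (f := fun t => D t (h t)) (C := ‖D‖ * ‖h‖) (Filter.Eventually.of_forall fun t =>
        ((D t).le_opNorm _).trans (mul_le_mul (D.norm_coe_le_norm t) (h.norm_coe_le_norm t)
          (norm_nonneg _) ((norm_nonneg (D t)).trans (D.norm_coe_le_norm t))))
    simpa using this

lemma aux_hasFDeriv {E : Type*} [NormedAddCommGroup E] [NormedSpace ℝ E]
    (φ : E → ℝ) (φ' : E → E →L[ℝ] ℝ) (hφ : ∀ x, HasFDerivAt φ (φ' x) x)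
    (hφ' : Continuous φ') (s w : C(unitInterval, E))
    (L : C(unitInterval, E) →L[ℝ] ℝ) (hL : ∀ h, L h = ∫ t, φ' (w t - s t) (h t)) :
    HasFDerivAt (fun w : C(unitInterval, E) => ∫ t, φ (w t - s t)) L w := by
  have hc : Continuous φ := continuous_iff_continuousAt.2 fun x => (hφ x).continuousAt
  have hint : ∀ g : unitInterval → ℝ, Continuous g → Integrable g := fun g hg =>
    hg.integrable_of_hasCompactSupport (HasCompactSupport.of_compactSpace _)
  rw [hasFDerivAt_iff_isLittleO, Asymptotics.isLittleO_iff]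
  intro ε hε
  have key : ∀ᶠ y in nhds (0 : E), ∀ t : unitInterval, t ∈ (Set.univ : Set unitInterval) →
      ‖φ' (w t - s t + y) - φ' (w t - s t)‖ < ε := by
    apply isCompact_univ.eventually_forall_of_forall_eventually
    intro t _
    have : Continuous fun z : E × unitInterval =>
      ‖φ' (w z.2 - s z.2 + z.1) - φ' (w z.2 - s z.2)‖ := by fun_prop
    apply this.continuousAt.eventually_lt continuousAt_const
    simpa using hε
  obtain ⟨δ, hδ, hb⟩ := Metric.eventually_nhds_iff_ball.1 key
  filter_upwards [Metric.ball_mem_nhds w hδ] with w' hw'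
  rw [hL, ← integral_sub (hint _ (by fun_prop)) (hint _ (by fun_prop)), ← integral_sub]
  rotate_left
  · exact (hint _ (by fun_prop)).sub (hint _ (by fun_prop))
  · exact hint _ (by fun_prop)
  have := norm_integral_le_of_norm_le_const (μ := (volume : Measure unitInterval))
      (f := fun t => φ (w' t - s t) - φ (w t - s t) - φ' (w t - s t) ((w' - w) t))
      (C := ε * ‖w' - w‖) (Filter.Eventually.of_forall fun t => ?_)
  · simpa using this
  · have hd : ‖(w' - w) t‖ < δ := 
      ((w' - w).norm_coe_le_norm t).trans_lt (by simpa [dist_eq_norm] using hw')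
    have h1 := (convex_ball (w t - s t) δ).norm_image_sub_le_of_norm_hasFDerivWithin_le'
      (f := φ) (f' := φ') (φ := φ' (w t - s t)) (C := ε) (x := w t - s t) (y := w' t - s t)
      (fun x _ => (hφ x).hasFDerivWithinAt) (fun x hx => by
        have := hb (x - (w t - s t)) (by simpa [dist_eq_norm] using hx) t trivial
        rw [add_sub_cancel] at this
        exact this.le) (Metric.mem_ball_self hδ) (by simpa [dist_eq_norm] using hd)
    rw [sub_sub_sub_cancel_right] at h1
    exact h1.trans (mul_le_mul_of_nonneg_left ((w' - w).norm_coe_le_norm t) hε.le)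

lemma aux_phi {E : Type*} [NormedAddCommGroup E] [InnerProductSpace ℝ E] (c q : ℝ) (hc : 0 < c)
    (x : E) : HasFDerivAt (fun x : E => (c ^ 2 + ‖x‖ ^ 2) ^ (q / 2))
      ((q * (c ^ 2 + ‖x‖ ^ 2) ^ (q / 2 - 1)) • innerSL ℝ x) x := by
  have h := ((hasStrictFDerivAt_norm_sq x).hasFDerivAt.const_add (c ^ 2)).rpow_const
    (p := q / 2) (Or.inl (by positivity))
  convert h using 1
  ext y
  simp
  ring



/-- Equip `C([0,1], ℝ^p)` with the supremum norm, fix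
`s ∈ C([0,1], ℝ^p)`, `c > 0`, `η ∈ (0,1]`, `q ≥ 4`, and let
`f(w) = η⁻¹ (∫₀¹ (c² + |w(t)−s(t)|²)^{q/2} dt)^{1/q}`. Then `f` is Fréchet differentiable,
`Df(w)[h] = η⁻¹ (∫₀¹ (c²+|w−s|²)^{q/2})^{1/q−1} ∫₀¹ (c²+|w−s|²)^{q/2−1} ⟨(w−s)(t), h(t)⟩ dt`,
and `sup_w ‖Df(w)‖ ≤ η⁻¹`. -/
theorem stmt_15 (p : ℕ) (hp : 1 ≤ p)
    (s : C(unitInterval, EuclideanSpace ℝ (Fin p)))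
    (c η q : ℝ) (hc : 0 < c) (hη : 0 < η) (hη1 : η ≤ 1) (hq : 4 ≤ q)
    (f : C(unitInterval, EuclideanSpace ℝ (Fin p)) → ℝ)
    (hf : ∀ w, f w
      = η⁻¹ * (∫ t, (c ^ 2 + ‖w t - s t‖ ^ 2) ^ (q / 2)) ^ (1 / q)) :
    Differentiable ℝ f ∧
    (∀ (w h : C(unitInterval, EuclideanSpace ℝ (Fin p))),
      fderiv ℝ f w h
        = η⁻¹ * (∫ t, (c ^ 2 + ‖w t - s t‖ ^ 2) ^ (q / 2)) ^ (1 / q - 1) *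
            ∫ t, (c ^ 2 + ‖w t - s t‖ ^ 2) ^ (q / 2 - 1) *
              (inner ℝ (w t - s t) (h t) : ℝ)) ∧
    (∀ w, ‖fderiv ℝ f w‖ ≤ η⁻¹) := by
  have hpos : ∀ x : EuclideanSpace ℝ (Fin p), 0 < c ^ 2 + ‖x‖ ^ 2 := fun x => by positivity
  have hint : ∀ g : unitInterval → ℝ, Continuous g → Integrable g := fun g hg =>
    hg.integrable_of_hasCompactSupport (HasCompactSupport.of_compactSpace _)
  have hcr : ∀ r : ℝ, Continuous fun x : EuclideanSpace ℝ (Fin p) => (c ^ 2 + ‖x‖ ^ 2) ^ r :=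
    fun r => (by fun_prop : Continuous fun x : EuclideanSpace ℝ (Fin p) =>
      c ^ 2 + ‖x‖ ^ 2).rpow_const fun x => Or.inl (hpos x).ne'
  have hcw : ∀ (w : C(unitInterval, EuclideanSpace ℝ (Fin p))) (r : ℝ),
      Continuous fun t => (c ^ 2 + ‖w t - s t‖ ^ 2) ^ r := fun w r =>
    (hcr r).comp (by fun_prop : Continuous fun t => w t - s t)
  have hφ' : Continuous fun x : EuclideanSpace ℝ (Fin p) =>
      (q * (c ^ 2 + ‖x‖ ^ 2) ^ (q / 2 - 1)) • innerSL ℝ x :=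
    (continuous_const.mul (hcr _)).smul (innerSL ℝ).continuous
  have hA : ∀ w : C(unitInterval, EuclideanSpace ℝ (Fin p)),
      0 < ∫ t, (c ^ 2 + ‖w t - s t‖ ^ 2) ^ (q / 2) := fun w => by
    apply (integral_pos_iff_support_of_nonneg (fun t => (Real.rpow_pos_of_pos (hpos _) _).le)
      (hint _ (hcw w _))).2
    have : Function.support (fun t => (c ^ 2 + ‖w t - s t‖ ^ 2) ^ (q / 2)) = Set.univ :=
      Set.eq_univ_of_forall fun t => (Real.rpow_pos_of_pos (hpos _) _).ne'
    rw [this]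
    simp
  have main : ∀ w : C(unitInterval, EuclideanSpace ℝ (Fin p)),
      ∃ L : C(unitInterval, EuclideanSpace ℝ (Fin p)) →L[ℝ] ℝ, HasFDerivAt f L w ∧
      ∀ h, L h = η⁻¹ * (∫ t, (c ^ 2 + ‖w t - s t‖ ^ 2) ^ (q / 2)) ^ (1 / q - 1) *
            ∫ t, (c ^ 2 + ‖w t - s t‖ ^ 2) ^ (q / 2 - 1) *
              (inner ℝ (w t - s t) (h t) : ℝ) := by
    intro w
    obtain ⟨L, hL⟩ := aux_exists_L (E := EuclideanSpace ℝ (Fin p))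
      ⟨_, hφ'.comp (by fun_prop : Continuous fun t => w t - s t)⟩
    have h1 := aux_hasFDeriv _ _ (aux_phi (E := EuclideanSpace ℝ (Fin p)) c q hc) hφ' s w L hL
    have h2 := (h1.rpow_const (p := 1 / q) (Or.inl (hA w).ne')).const_mul η⁻¹
    refine ⟨_, h2.congr_of_eventuallyEq (Filter.Eventually.of_forall hf), fun h => ?_⟩
    have h3 : L h = q * ∫ t, (c ^ 2 + ‖w t - s t‖ ^ 2) ^ (q / 2 - 1) *
              (inner ℝ (w t - s t) (h t) : ℝ) := by
      rw [hL, ← integral_const_mul]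
      congr 1
      ext t
      exact mul_assoc _ _ _
    simp only [smul_apply, smul_eq_mul, h3]
    have : q ≠ 0 := by positivity
    field_simp
  choose L hL hLe using main
  refine ⟨fun w => (hL w).differentiableAt, fun w h => by rw [(hL w).fderiv, hLe], fun w => ?_⟩
  rw [(hL w).fderiv]
  refine ContinuousLinearMap.opNorm_le_bound _ (by positivity) fun h => ?_
  rw [hLe, mul_assoc, norm_mul, norm_mul, Real.norm_of_nonneg (by positivity : 0 ≤ η⁻¹),
    Real.norm_of_nonneg (Real.rpow_nonneg (hA w).le _)]
  refine mul_le_mul_of_nonneg_left ?_ (by positivity)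
  have hB : ‖∫ t, (c ^ 2 + ‖w t - s t‖ ^ 2) ^ (q / 2 - 1) * (inner ℝ (w t - s t) (h t) : ℝ)‖ ≤
      (∫ t, ((c ^ 2 + ‖w t - s t‖ ^ 2) ^ (q / 2)) ^ (1 - 1 / q)) * ‖h‖ := by
    rw [← integral_mul_const]
    refine norm_integral_le_of_norm_le ?_ (Filter.Eventually.of_forall fun t => ?_)
    · exact (hint _ ((hcw w _).rpow_const
        fun t => Or.inl (Real.rpow_pos_of_pos (hpos _) _).ne')).mul_const _
    · have hu := hpos (w t - s t)
      have e : ((c ^ 2 + ‖w t - s t‖ ^ 2) ^ (q / 2)) ^ (1 - 1 / q)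
          = (c ^ 2 + ‖w t - s t‖ ^ 2) ^ (q / 2 - 1) * √(c ^ 2 + ‖w t - s t‖ ^ 2) := by
        rw [← Real.rpow_mul hu.le, Real.sqrt_eq_rpow, ← Real.rpow_add hu]
        congr 1
        field_simp
        ring
      rw [e, norm_mul, Real.norm_of_nonneg (Real.rpow_nonneg hu.le _), mul_assoc]
      refine mul_le_mul_of_nonneg_left ?_ (Real.rpow_nonneg hu.le _)
      refine (norm_inner_le_norm _ _).trans (mul_le_mul ?_ (h.norm_coe_le_norm t)
        (norm_nonneg _) (Real.sqrt_nonneg _))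
      exact Real.le_sqrt_of_sq_le (by nlinarith)
  have hq1 : 1 / q ≤ 1 := by
    rw [div_le_one (by linarith)]
    linarith
  have hq0 : 0 ≤ 1 / q := by positivity
  have hJ : (∫ t, ((c ^ 2 + ‖w t - s t‖ ^ 2) ^ (q / 2)) ^ (1 - 1 / q)) ≤
      (∫ t, (c ^ 2 + ‖w t - s t‖ ^ 2) ^ (q / 2)) ^ (1 - 1 / q) := by
    refine (Real.concaveOn_rpow (p := 1 - 1 / q) (by linarith) (by linarith)).le_map_integral
      (μ := (volume : Measure unitInterval)) ?_ isClosed_Ici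
      (Filter.Eventually.of_forall fun t => Real.rpow_nonneg (hpos _).le _)
      (hint _ (hcw w _)) (hint _ ((hcw w _).rpow_const
        fun t => Or.inl (Real.rpow_pos_of_pos (hpos _) _).ne'))
    exact (Real.continuous_rpow_const (by linarith)).continuousOn
  calc _ ≤ (∫ t, (c ^ 2 + ‖w t - s t‖ ^ 2) ^ (q / 2)) ^ (1 / q - 1) *
        ((∫ t, (c ^ 2 + ‖w t - s t‖ ^ 2) ^ (q / 2)) ^ (1 - 1 / q) * ‖h‖) :=
        mul_le_mul_of_nonneg_left (hB.trans (mul_le_mul_of_nonneg_right hJ (norm_nonneg _)))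
          (Real.rpow_nonneg (hA w).le _)
    _ = ‖h‖ := by
        rw [← mul_assoc, ← Real.rpow_add (hA w)]
        simp
end

section
/- The function f is twice Fréchet differentiable on C([0,1],ℝ^p) and sup_{w} ‖D²f(w)‖ ≤ 2(q−1)/(ηc), where ‖D²f(w)‖ = sup_{‖h‖=1} |D²f(w)[h,h]| is the norm of the bilinear form D²f(w). -/
open MeasureTheory
set_option maxSynthPendingDepth 3

noncomputable def nemDeriv {K V W : Type*} [TopologicalSpace K] [CompactSpace K]
    [NormedAddCommGroup V] [NormedSpace ℝ V] [NormedAddCommGroup W] [NormedSpace ℝ W]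
    (A : C(K, V →L[ℝ] W)) : C(K, V) →L[ℝ] C(K, W) :=
  LinearMap.mkContinuous
    { toFun := fun h => ⟨fun t => A t (h t), by fun_prop⟩
      map_add' := by intro x y; ext t; simp
      map_smul' := by intro x y; ext t; simp } ‖A‖ (by
    intro h
    rw [ContinuousMap.norm_le _ (by positivity)]
    intro t
    exact (A t).le_of_opNorm_le_of_le (A.norm_coe_le_norm t) (h.norm_coe_le_norm t))

theorem nemDeriv_apply {K V W : Type*} [TopologicalSpace K] [CompactSpace K]
    [NormedAddCommGroup V] [NormedSpace ℝ V] [NormedAddCommGroup W] [NormedSpace ℝ W]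
    (A : C(K, V →L[ℝ] W)) (h : C(K, V)) (t : K) : nemDeriv A h t = A t (h t) := rfl

theorem nem_hasFDerivAt {K V W : Type*} [TopologicalSpace K] [CompactSpace K]
    [NormedAddCommGroup V] [NormedSpace ℝ V] [NormedAddCommGroup W] [NormedSpace ℝ W]
    (g : C(V, W)) (g' : C(V, V →L[ℝ] W)) (hg : ∀ v, HasFDerivAt g (g' v) v) (w : C(K, V)) :
    HasFDerivAt (fun u : C(K, V) => g.comp u) (nemDeriv (g'.comp w)) w := by
  rw [hasFDerivAt_iff_isLittleO, Asymptotics.isLittleO_iff]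
  intro ε hε
  have hcont : Continuous (fun u : C(K, V) => g'.comp u) := ContinuousMap.continuous_postcomp g'
  obtain ⟨δ, hδ, H⟩ := Metric.continuous_iff.1 hcont w ε hε
  filter_upwards [Metric.ball_mem_nhds w hδ] with u hu
  rw [ContinuousMap.norm_le _ (by positivity)]
  intro t
  have key := (convex_segment (𝕜 := ℝ) (w t) (u t)).norm_image_sub_le_of_norm_hasFDerivWithin_le'
    (f := g) (f' := g') (φ := g' (w t)) (C := ε)
    (fun x _ => (hg x).hasFDerivWithinAt) (by
      intro x hx
      rw [segment_eq_image'] at hx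
      obtain ⟨θ, ⟨h0, h1⟩, rfl⟩ := hx
      have h2 : dist (w + θ • (u - w)) w < δ := by
        rw [dist_eq_norm, add_sub_cancel_left, norm_smul, Real.norm_of_nonneg h0]
        rw [Metric.mem_ball, dist_eq_norm] at hu
        nlinarith [norm_nonneg (u - w)]
      have h3 := H _ h2
      rw [dist_eq_norm] at h3
      exact ((g'.comp (w + θ • (u - w)) - g'.comp w).norm_coe_le_norm t).trans h3.le)
    (left_mem_segment ℝ _ _) (right_mem_segment ℝ _ _)
  refine key.trans ?_
  gcongr
  exact (u - w).norm_coe_le_norm t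

noncomputable def pairB {K V : Type*} [TopologicalSpace K] [CompactSpace K] [MeasurableSpace K]
    [BorelSpace K] [NormedAddCommGroup V] [InnerProductSpace ℝ V]
    (μ : Measure K) [IsProbabilityMeasure μ] : C(K, V) →L[ℝ] C(K, V) →L[ℝ] ℝ :=
  LinearMap.mkContinuous₂ (LinearMap.mk₂ ℝ (fun a h : C(K, V) => ∫ t, inner ℝ (a t) (h t) ∂μ)
    (by
      intro a b h
      simp only [ContinuousMap.add_apply, inner_add_left]
      exact integral_add (Continuous.integrable_of_hasCompactSupport (by fun_prop) (HasCompactSupport.of_compactSpace _))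
       (Continuous.integrable_of_hasCompactSupport (by fun_prop) (HasCompactSupport.of_compactSpace _)))
    (by
      intro r a h
      simp only [ContinuousMap.smul_apply, real_inner_smul_left, smul_eq_mul]
      exact integral_const_mul _ _)
    (by
      intro a b h
      simp only [ContinuousMap.add_apply, inner_add_right]
      exact integral_add (Continuous.integrable_of_hasCompactSupport (by fun_prop) (HasCompactSupport.of_compactSpace _))
       (Continuous.integrable_of_hasCompactSupport (by fun_prop) (HasCompactSupport.of_compactSpace _)))
    (by
      intro r a h
      simp only [ContinuousMap.smul_apply, real_inner_smul_right, smul_eq_mul]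
      exact integral_const_mul _ _)) 1 (by
    intro a h
    have : ‖∫ t, inner ℝ (a t) (h t) ∂μ‖ ≤ ‖a‖ * ‖h‖ * μ.real Set.univ :=
      norm_integral_le_of_norm_le_const (Filter.Eventually.of_forall fun t => 
        (norm_inner_le_norm _ _).trans (mul_le_mul (a.norm_coe_le_norm t) (h.norm_coe_le_norm t) (norm_nonneg _) (norm_nonneg _)))
    simpa using this)

theorem pairB_apply {K V : Type*} [TopologicalSpace K] [CompactSpace K] [MeasurableSpace K]
    [BorelSpace K] [NormedAddCommGroup V] [InnerProductSpace ℝ V]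
    (μ : Measure K) [IsProbabilityMeasure μ] (a h : C(K, V)) :
    pairB μ a h = ∫ t, inner ℝ (a t) (h t) ∂μ := rfl

noncomputable def intL {K : Type*} [TopologicalSpace K] [CompactSpace K] [MeasurableSpace K]
    [BorelSpace K] 
    (μ : Measure K) [IsProbabilityMeasure μ] : C(K, ℝ) →L[ℝ] ℝ := pairB μ (ContinuousMap.const K (1:ℝ))

theorem intL_apply {K : Type*} [TopologicalSpace K] [CompactSpace K] [MeasurableSpace K]
    [BorelSpace K] 
    (μ : Measure K) [IsProbabilityMeasure μ] (h : C(K, ℝ)) : intL μ h = ∫ t, h t ∂μ := by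
  simp [intL, pairB_apply]

theorem hasF0 {V : Type*} [NormedAddCommGroup V] [InnerProductSpace ℝ V] (c r : ℝ) (hc : 0 < c) (v : V) :
    HasFDerivAt (fun v : V => (c ^ 2 + ‖v‖ ^ 2) ^ r)
      ((2 * r * (c ^ 2 + ‖v‖ ^ 2) ^ (r - 1)) • innerSL ℝ v) v := by
  have h := (((hasStrictFDerivAt_norm_sq v).hasFDerivAt).const_add (c ^ 2)).rpow_const (p := r)
    (Or.inl (by positivity))
  refine h.congr_fderiv ?_
  ext x
  simp
  ring

theorem hasF1 {V : Type*} [NormedAddCommGroup V] [InnerProductSpace ℝ V] (c r : ℝ) (hc : 0 < c) (v : V) :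
    HasFDerivAt (fun v : V => (c ^ 2 + ‖v‖ ^ 2) ^ r • v)
      ((c ^ 2 + ‖v‖ ^ 2) ^ r • ContinuousLinearMap.id ℝ V + 
       ((2 * r * (c ^ 2 + ‖v‖ ^ 2) ^ (r - 1)) • innerSL ℝ v).smulRight v) v := 
  (hasF0 c r hc v).smul (hasFDerivAt_id v)

theorem cont_phi {V : Type*} [NormedAddCommGroup V] [InnerProductSpace ℝ V] (c r : ℝ) (hc : 0 < c) :
   Continuous (fun v : V => (c ^ 2 + ‖v‖ ^ 2) ^ r) :=
  Continuous.rpow_const (by fun_prop) (fun v => Or.inl (by positivity))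

theorem cont0 {V : Type*} [NormedAddCommGroup V] [InnerProductSpace ℝ V] (c r : ℝ) (hc : 0 < c) :
   Continuous (fun v : V => (2 * r * (c ^ 2 + ‖v‖ ^ 2) ^ (r - 1)) • innerSL ℝ v) := by
  have := cont_phi (V := V) c (r-1) hc
  fun_prop

theorem cont1 {V : Type*} [NormedAddCommGroup V] [InnerProductSpace ℝ V] (c r : ℝ) (hc : 0 < c) :
   Continuous (fun v : V => (c ^ 2 + ‖v‖ ^ 2) ^ r • ContinuousLinearMap.id ℝ V + 
       ((2 * r * (c ^ 2 + ‖v‖ ^ 2) ^ (r - 1)) • innerSL ℝ v).smulRight v) := by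
  have h1 := cont_phi (V := V) c r hc
  have h2 := cont0 (V := V) c r hc
  have h3 : Continuous (fun v : V => ((2 * r * (c ^ 2 + ‖v‖ ^ 2) ^ (r - 1)) • innerSL ℝ v).smulRight v) := 
    ((ContinuousLinearMap.smulRightL ℝ V V).continuous.comp h2).clm_apply continuous_id
  fun_prop

theorem contG {V : Type*} [NormedAddCommGroup V] [InnerProductSpace ℝ V] (c r : ℝ) (hc : 0 < c) :
   Continuous (fun v : V => (c ^ 2 + ‖v‖ ^ 2) ^ r • v) := by
  have h1 := cont_phi (V := V) c r hc
  fun_prop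

theorem int_cont {K : Type*} [TopologicalSpace K] [CompactSpace K] [MeasurableSpace K]
    [BorelSpace K] (μ : Measure K) [IsProbabilityMeasure μ] (g : K → ℝ) (hg : Continuous g) :
    Integrable g μ :=
  hg.integrable_of_hasCompactSupport (HasCompactSupport.of_compactSpace _)

theorem main_aux {K V : Type*} [TopologicalSpace K] [CompactSpace K] [MeasurableSpace K]
    [BorelSpace K] [NormedAddCommGroup V] [InnerProductSpace ℝ V]
    (μ : Measure K) [IsProbabilityMeasure μ] (s : C(K, V))
    (c η q : ℝ) (hc : 0 < c) (hη : 0 < η) (hq : 4 ≤ q)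
    (f : C(K, V) → ℝ)
    (hf : ∀ w, f w = η⁻¹ * (∫ t, (c ^ 2 + ‖w t - s t‖ ^ 2) ^ (q / 2) ∂μ) ^ (1 / q)) :
    Differentiable ℝ f ∧
    Differentiable ℝ (fderiv ℝ f) ∧
    (∀ w, ‖fderiv ℝ (fderiv ℝ f) w‖ ≤ 2 * (q - 1) / (η * c)) := by
  have hq0 : 0 < q := by linarith
  let I : C(K, V) → ℝ := fun w => ∫ t, (c ^ 2 + ‖w t - s t‖ ^ 2) ^ (q / 2) ∂μ
  let g0 : C(V, ℝ) := ⟨_, cont_phi c (q / 2) hc⟩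
  let g0' : C(V, V →L[ℝ] ℝ) := ⟨_, cont0 c (q / 2) hc⟩
  let G : C(V, V) := ⟨_, contG c (q / 2 - 1) hc⟩
  let G' : C(V, V →L[ℝ] V) := ⟨_, cont1 c (q / 2 - 1) hc⟩
  let N : C(K, V) → C(K, V) := fun w => G.comp (w - s)
  have hN : ∀ w, HasFDerivAt N (nemDeriv (G'.comp (w - s))) w := fun w => by
    have h1 := nem_hasFDerivAt (K := K) G G' (fun v => hasF1 c (q / 2 - 1) hc v) (w - s)
    exact h1.comp w ((hasFDerivAt_id w).sub_const s)
  have hI : ∀ w, HasFDerivAt I (q • pairB μ (N w)) w := fun w => by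
    have h1 := nem_hasFDerivAt (K := K) g0 g0' (fun v => hasF0 c (q / 2) hc v) (w - s)
    have h2 := (intL μ).hasFDerivAt.comp w (h1.comp w ((hasFDerivAt_id w).sub_const s))
    have h3 : I = (intL μ) ∘ ((fun u : C(K, V) => g0.comp u) ∘ fun w => id w - s) := by
      funext w
      simp only [Function.comp, intL_apply]
      rfl
    rw [h3]
    refine h2.congr_fderiv ?_
    ext h
    simp only [ContinuousLinearMap.comp_apply, intL_apply, ContinuousLinearMap.smul_apply,
      pairB_apply, smul_eq_mul, nemDeriv_apply, ContinuousLinearMap.id_apply]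
    rw [← integral_const_mul]
    congr 1
    funext t
    simp [g0', N, G, real_inner_smul_left, inner_sub_left]
    ring
  have hcont : ∀ (w : C(K, V)) (r : ℝ), Continuous fun t => (c ^ 2 + ‖w t - s t‖ ^ 2) ^ r :=
    fun w r => (cont_phi c r hc).comp (w - s).continuous
  have hIc : ∀ w, c ^ q ≤ I w := fun w => by
    have : ∫ t, c ^ q ∂μ ≤ I w := by
      refine integral_mono (integrable_const _) (int_cont μ _ (hcont w _)) fun t => ?_
      have : c ^ q = (c ^ 2) ^ (q / 2) := by
        rw [← Real.rpow_natCast c 2, ← Real.rpow_mul hc.le]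
        congr 1
        push_cast
        ring
      simp only
      rw [this]
      exact Real.rpow_le_rpow (by positivity) (by nlinarith [sq_nonneg ‖w t - s t‖]) (by positivity)
    simpa using this
  have hIpos : ∀ w, 0 < I w := fun w => (Real.rpow_pos_of_pos hc q).trans_le (hIc w)
  have hF1 : ∀ w, HasFDerivAt f ((η⁻¹ * I w ^ (1 / q - 1)) • pairB μ (N w)) w := fun w => by
    have h1 := ((hI w).rpow_const (p := 1 / q) (Or.inl (hIpos w).ne')).const_mul η⁻¹
    have h2 : f = fun w => η⁻¹ * I w ^ (1 / q) := funext hf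
    rw [h2]
    refine h1.congr_fderiv ?_
    rw [smul_smul, smul_smul]
    congr 1
    field_simp
  have hfd : fderiv ℝ f = fun w => (η⁻¹ * I w ^ (1 / q - 1)) • pairB μ (N w) :=
    funext fun w => (hF1 w).fderiv
  have hF2 : ∀ w, HasFDerivAt (fderiv ℝ f)
      ((η⁻¹ * I w ^ (1 / q - 1)) • ((pairB μ).comp (nemDeriv (G'.comp (w - s)))) +
       ((η⁻¹ • ((1 / q - 1) * I w ^ (1 / q - 1 - 1)) • (q • pairB μ (N w)))).smulRight
         (pairB μ (N w))) w := fun w => by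
    rw [hfd]
    have h1 := ((hI w).rpow_const (p := 1 / q - 1) (Or.inl (hIpos w).ne')).const_mul η⁻¹
    have h2 : HasFDerivAt (fun w => pairB μ (N w))
        ((pairB μ).comp (nemDeriv (G'.comp (w - s)))) w :=
      by
        have h3 := ContinuousLinearMap.hasFDerivAt (x := N w) (pairB (V := V) μ)
        exact h3.comp w (hN w)
    exact h1.smul h2
  refine ⟨fun w => (hF1 w).differentiableAt, fun w => (hF2 w).differentiableAt, fun w => ?_⟩
  rw [(hF2 w).fderiv]
  -- Jensen
  set J : ℝ := ∫ t, (c ^ 2 + ‖w t - s t‖ ^ 2) ^ ((q - 1) / 2) ∂μ with hJ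
  have hpos : ∀ t, 0 < c ^ 2 + ‖w t - s t‖ ^ 2 := fun t => by positivity
  have hJ0 : 0 ≤ J := integral_nonneg fun t => (Real.rpow_pos_of_pos (hpos t) _).le
  have hJI : J ≤ I w ^ (1 - 1 / q) := by
    have hq1 : 1 / q ≤ 1 := by rw [div_le_one hq0]; linarith
    have hq2 : 0 < 1 / q := by positivity
    have he : ∀ t, ((c ^ 2 + ‖w t - s t‖ ^ 2) ^ (q / 2)) ^ (1 - 1 / q)
        = (c ^ 2 + ‖w t - s t‖ ^ 2) ^ ((q - 1) / 2) := fun t => by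
      rw [← Real.rpow_mul (hpos t).le]
      congr 1
      field_simp
    have h := (Real.concaveOn_rpow (p := 1 - 1 / q) (by linarith) (by linarith)).le_map_integral
      (μ := μ) (f := fun t => (c ^ 2 + ‖w t - s t‖ ^ 2) ^ (q / 2))
      (continuousOn_id.rpow_const fun x _ => Or.inr (by linarith)) isClosed_Ici
      (Filter.Eventually.of_forall fun t => (Real.rpow_pos_of_pos (hpos t) _).le)
      (int_cont μ _ (hcont w _))
      (by
        refine int_cont μ _ ?_
        have : (fun x : ℝ => x ^ (1 - 1 / q)) ∘ (fun t => (c ^ 2 + ‖w t - s t‖ ^ 2) ^ (q / 2))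
          = fun t => (c ^ 2 + ‖w t - s t‖ ^ 2) ^ ((q - 1) / 2) := funext he
        rw [this]
        exact hcont w _)
    simp only [he] at h
    exact h
  have hsplit : ∀ (t : K) (x : ℝ), (c ^ 2 + ‖w t - s t‖ ^ 2) ^ (x + 1 / 2) =
      (c ^ 2 + ‖w t - s t‖ ^ 2) ^ x * √(c ^ 2 + ‖w t - s t‖ ^ 2) := fun t x => by
    rw [Real.rpow_add (hpos t), Real.sqrt_eq_rpow]
  have hL : ∀ h, |pairB μ (N w) h| ≤ J * ‖h‖ := fun h => by
    rw [pairB_apply, hJ, ← integral_mul_const, ← Real.norm_eq_abs]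
    refine norm_integral_le_of_norm_le ((int_cont μ _ (hcont w _)).mul_const _)
      (Filter.Eventually.of_forall fun t => ?_)
    have h1 : N w t = (c ^ 2 + ‖w t - s t‖ ^ 2) ^ (q / 2 - 1) • (w t - s t) := rfl
    have h0 := Real.rpow_pos_of_pos (hpos t) (q / 2 - 1)
    have h3 : ‖w t - s t‖ ≤ √(c ^ 2 + ‖w t - s t‖ ^ 2) :=
      Real.le_sqrt_of_sq_le (by nlinarith)
    refine (norm_inner_le_norm _ _).trans ?_
    rw [h1, norm_smul, Real.norm_of_nonneg h0.le,
      show (q - 1) / 2 = (q / 2 - 1) + 1 / 2 by ring, hsplit]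
    gcongr
    exact h.norm_coe_le_norm t
  have hQ : ∀ h k, |pairB μ (nemDeriv (G'.comp (w - s)) h) k| ≤ (q - 1) / c * J * (‖h‖ * ‖k‖) := by
    intro h k
    rw [pairB_apply, hJ, ← Real.norm_eq_abs, ← integral_const_mul, ← integral_mul_const]
    refine norm_integral_le_of_norm_le (((int_cont μ _ (hcont w _)).const_mul _).mul_const _)
      (Filter.Eventually.of_forall fun t => ?_)
    set u := w t - s t with hu
    set P := c ^ 2 + ‖u‖ ^ 2 with hP
    have hPp : 0 < P := hpos t
    have h1 : nemDeriv (G'.comp (w - s)) h t = P ^ (q / 2 - 1) • h t +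
      (2 * (q / 2 - 1) * P ^ (q / 2 - 1 - 1) * inner ℝ u (h t)) • u := rfl
    have hA := Real.rpow_pos_of_pos hPp (q / 2 - 1)
    have hB := Real.rpow_pos_of_pos hPp (q / 2 - 1 - 1)
    have hBA : P ^ (q / 2 - 1) = P ^ (q / 2 - 1 - 1) * P := by
      rw [← Real.rpow_add_one hPp.ne']; ring_nf
    have huP : ‖u‖ ^ 2 ≤ P := by nlinarith
    have hcs : c ≤ √P := Real.le_sqrt_of_sq_le (by nlinarith [sq_nonneg ‖u‖])
    have h2 : ‖nemDeriv (G'.comp (w - s)) h t‖ ≤ (q - 1) * P ^ (q / 2 - 1) * ‖h t‖ := by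
      rw [h1]
      refine (norm_add_le _ _).trans ?_
      rw [norm_smul, norm_smul, Real.norm_of_nonneg hA.le, norm_mul, Real.norm_of_nonneg
        (by have : 0 ≤ q / 2 - 1 := by linarith
            positivity : 0 ≤ 2 * (q / 2 - 1) * P ^ (q / 2 - 1 - 1))]
      have h4 : ‖inner ℝ u (h t)‖ ≤ ‖u‖ * ‖h t‖ := norm_inner_le_norm _ _
      have h5 : P ^ (q / 2 - 1 - 1) * (‖inner ℝ u (h t)‖ * ‖u‖) ≤ P ^ (q / 2 - 1) * ‖h t‖ := by
        rw [hBA, mul_assoc]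
        refine mul_le_mul_of_nonneg_left ?_ hB.le
        calc ‖inner ℝ u (h t)‖ * ‖u‖ ≤ ‖u‖ * ‖h t‖ * ‖u‖ := by gcongr
          _ = ‖u‖ ^ 2 * ‖h t‖ := by ring
          _ ≤ _ := by gcongr
      nlinarith [mul_le_mul_of_nonneg_left h5 (by linarith : 0 ≤ q - 2)]
    refine (norm_inner_le_norm _ _).trans ?_
    rw [show (q - 1) / 2 = (q / 2 - 1) + 1 / 2 by ring, hsplit]
    have h6 : (q - 1) * P ^ (q / 2 - 1) ≤ (q - 1) / c * (P ^ (q / 2 - 1) * √P) := by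
      rw [div_mul_eq_mul_div, le_div_iff₀ hc, mul_assoc]
      gcongr
      linarith
    have hq1 : 0 ≤ q - 1 := by linarith
    calc _ ≤ ((q - 1) * P ^ (q / 2 - 1) * ‖h‖) * ‖k‖ := by
          gcongr
          · refine h2.trans ?_
            gcongr
            exact h.norm_coe_le_norm t
          · exact k.norm_coe_le_norm t
      _ = ((q - 1) * P ^ (q / 2 - 1)) * (‖h‖ * ‖k‖) := by ring
      _ ≤ _ := by gcongr
  have hq1 : 0 ≤ q - 1 := by linarith
  refine ContinuousLinearMap.opNorm_le_bound₂ _ (by positivity) fun h k => ?_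
  simp only [ContinuousLinearMap.add_apply, ContinuousLinearMap.smul_apply,
    ContinuousLinearMap.comp_apply, ContinuousLinearMap.smulRight_apply, smul_eq_mul]
  have hIp := hIpos w
  have e1 : I w ^ (1 / q - 1) * I w ^ (1 - 1 / q) = 1 := by
    rw [← Real.rpow_add hIp]; simp
  have hX := Real.rpow_pos_of_pos hIp (1 / q - 1)
  have hY := Real.rpow_pos_of_pos hIp (1 / q - 1 - 1)
  have b1 : I w ^ (1 / q - 1) * J ≤ 1 := by
    refine le_trans ?_ e1.le
    gcongr
  have hroot : c ≤ I w ^ (1 / q) := by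
    have := Real.rpow_le_rpow (by positivity) (hIc w) (by positivity : 0 ≤ 1 / q)
    rwa [← Real.rpow_mul hc.le, mul_one_div_cancel hq0.ne', Real.rpow_one] at this
  have b2 : I w ^ (1 / q - 1 - 1) * J ^ 2 ≤ 1 / c := by
    have e2 : I w ^ (1 / q - 1 - 1) * (I w ^ (1 - 1 / q)) ^ 2 * I w ^ (1 / q) = 1 := by
      rw [← Real.rpow_natCast (I w ^ (1 - 1 / q)) 2, ← Real.rpow_mul hIp.le,
        ← Real.rpow_add hIp, ← Real.rpow_add hIp]
      rw [show (1 / q - 1 - 1 + (1 - 1 / q) * ((2 : ℕ) : ℝ) + 1 / q) = 0 by push_cast; ring,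
        Real.rpow_zero]
    rw [le_div_iff₀ hc]
    refine le_trans ?_ e2.le
    gcongr
  have t1 : |η⁻¹ * I w ^ (1 / q - 1) * pairB μ (nemDeriv (G'.comp (w - s)) h) k|
      ≤ (q - 1) / (η * c) * (‖h‖ * ‖k‖) := by
    rw [abs_mul, abs_of_pos (by positivity)]
    calc _ ≤ η⁻¹ * I w ^ (1 / q - 1) * ((q - 1) / c * J * (‖h‖ * ‖k‖)) := by
          gcongr
          exact hQ h k
      _ = (q - 1) / (η * c) * (‖h‖ * ‖k‖) * (I w ^ (1 / q - 1) * J) := by field_simp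
      _ ≤ _ := mul_le_of_le_one_right (by positivity) b1
  have t2 : |η⁻¹ * ((1 / q - 1) * I w ^ (1 / q - 1 - 1) * (q * pairB μ (N w) h)) * pairB μ (N w) k|
      ≤ (q - 1) / (η * c) * (‖h‖ * ‖k‖) := by
    have : η⁻¹ * ((1 / q - 1) * I w ^ (1 / q - 1 - 1) * (q * pairB μ (N w) h)) * pairB μ (N w) k
      = -(((q - 1) * η⁻¹ * I w ^ (1 / q - 1 - 1)) * (pairB μ (N w) h * pairB μ (N w) k)) := by
      have : (1 / q - 1) * q = -(q - 1) := by field_simp; ring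
      linear_combination (η⁻¹ * I w ^ (1 / q - 1 - 1) * pairB μ (N w) h * pairB μ (N w) k) * this
    rw [this, abs_neg, abs_mul, abs_of_nonneg (by positivity), abs_mul]
    calc _ ≤ (q - 1) * η⁻¹ * I w ^ (1 / q - 1 - 1) * ((J * ‖h‖) * (J * ‖k‖)) := by
          gcongr
          · exact hL h
          · exact hL k
      _ = (q - 1) * η⁻¹ * (‖h‖ * ‖k‖) * (I w ^ (1 / q - 1 - 1) * J ^ 2) := by ring
      _ ≤ (q - 1) * η⁻¹ * (‖h‖ * ‖k‖) * (1 / c) := by gcongr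
      _ = _ := by field_simp
  refine (norm_add_le _ _).trans ?_
  rw [Real.norm_eq_abs, Real.norm_eq_abs]
  refine (add_le_add t1 t2).trans (le_of_eq ?_)
  ring




/-- With `f(w) = η⁻¹ (∫₀¹ (c² + |w(t)−s(t)|²)^{q/2} dt)^{1/q}` on
`C([0,1], ℝ^p)` (sup norm), `c > 0`, `η ∈ (0,1]`, `q ≥ 4`, the function `f` is twice
Fréchet differentiable and `sup_w ‖D²f(w)‖ ≤ 2(q−1)/(ηc)`. -/
theorem stmt_16 (p : ℕ) (hp : 1 ≤ p)
    (s : C(unitInterval, EuclideanSpace ℝ (Fin p)))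
    (c η q : ℝ) (hc : 0 < c) (hη : 0 < η) (hη1 : η ≤ 1) (hq : 4 ≤ q)
    (f : C(unitInterval, EuclideanSpace ℝ (Fin p)) → ℝ)
    (hf : ∀ w, f w
      = η⁻¹ * (∫ t, (c ^ 2 + ‖w t - s t‖ ^ 2) ^ (q / 2)) ^ (1 / q)) :
    Differentiable ℝ f ∧
    Differentiable ℝ (fderiv ℝ f) ∧
    (∀ w, ‖fderiv ℝ (fderiv ℝ f) w‖ ≤ 2 * (q - 1) / (η * c)) := by
  exact main_aux volume s c η q hc hη hq f hf
end

section
/- The function f is three times Fréchet differentiable on C([0,1],ℝ^p) and sup_{w} ‖D³f(w)‖ ≤ 15 q² / (η c²), where ‖D³f(w)‖ = sup_{‖h‖=1} |D³f(w)[h,h,h]| is the norm of the trilinear form D³f(w). (Assume additionally q ≥ 6 so that all Hölder exponents used are admissible.) -/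
open MeasureTheory

set_option maxSynthPendingDepth 3

/-- A function with three successive Frechet derivatives, the last one continuous. -/
structure Chain3 {V : Type*} [NormedAddCommGroup V] [NormedSpace ℝ V]
    (F : V → ℝ) (F1 : V → V →L[ℝ] ℝ) (F2 : V → V →L[ℝ] V →L[ℝ] ℝ)
    (F3 : V → V →L[ℝ] V →L[ℝ] V →L[ℝ] ℝ) : Prop where
  h1 : ∀ w, HasFDerivAt F (F1 w) w
  h2 : ∀ w, HasFDerivAt F1 (F2 w) w
  h3 : ∀ w, HasFDerivAt F2 (F3 w) w
  hc : Continuous F3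

section chain
variable {V : Type*} [NormedAddCommGroup V] [NormedSpace ℝ V]

theorem Chain3.shift {F : V → ℝ} {F1 : V → V →L[ℝ] ℝ} {F2 : V → V →L[ℝ] V →L[ℝ] ℝ}
    {F3 : V → V →L[ℝ] V →L[ℝ] V →L[ℝ] ℝ} (H : Chain3 F F1 F2 F3) (s : V) :
    Chain3 (fun w => F (w - s)) (fun w => F1 (w - s)) (fun w => F2 (w - s))
      (fun w => F3 (w - s)) := by
  refine ⟨fun w => ?_, fun w => ?_, fun w => ?_, H.hc.comp (continuous_id.sub continuous_const)⟩
  · exact (H.h1 (w - s)).comp w ((hasFDerivAt_id w).sub_const s)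
  · exact (H.h2 (w - s)).comp w ((hasFDerivAt_id w).sub_const s)
  · exact (H.h3 (w - s)).comp w ((hasFDerivAt_id w).sub_const s)

theorem Chain3.rpow {F : V → ℝ} {F1 : V → V →L[ℝ] ℝ} {F2 : V → V →L[ℝ] V →L[ℝ] ℝ}
    {F3 : V → V →L[ℝ] V →L[ℝ] V →L[ℝ] ℝ} (H : Chain3 F F1 F2 F3) (hpos : ∀ w, 0 < F w)
    (a b : ℝ) : ∃ G1 G2 G3, Chain3 (fun w => a * F w ^ b) G1 G2 G3 ∧
      (∀ w h, G1 w h = a * b * F w ^ (b - 1) * F1 w h) ∧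
      (∀ w k h, G2 w k h = a * b * F w ^ (b - 1) * F2 w k h
        + a * b * (b - 1) * F w ^ (b - 2) * (F1 w k * F1 w h)) ∧
      (∀ w l k h, G3 w l k h = a * b * F w ^ (b - 1) * F3 w l k h
        + a * b * (b - 1) * F w ^ (b - 2) *
          (F1 w l * F2 w k h + F2 w l k * F1 w h + F1 w k * F2 w l h)
        + a * b * (b - 1) * (b - 2) * F w ^ (b - 3) * (F1 w l * F1 w k * F1 w h)) := by
  have hp : ∀ e r : ℝ, ∀ w, HasFDerivAt (fun w => e * F w ^ r)
      ((e * (r * F w ^ (r - 1))) • F1 w) w := by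
    intro e r w
    have := ((H.h1 w).rpow_const (p := r) (Or.inl (hpos w).ne')).const_mul e
    rwa [smul_smul] at this
  have hF : Continuous F := continuous_iff_continuousAt.2 fun w => (H.h1 w).continuousAt
  have hF1 : Continuous F1 := continuous_iff_continuousAt.2 fun w => (H.h2 w).continuousAt
  have hF2 : Continuous F2 := continuous_iff_continuousAt.2 fun w => (H.h3 w).continuousAt
  have hF3 := H.hc
  have hpc : ∀ r : ℝ, Continuous fun w => F w ^ r := fun r =>
    hF.rpow_const fun w => Or.inl (hpos w).ne'
  let S1 := ContinuousLinearMap.smulRightL ℝ V (V →L[ℝ] ℝ)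
  let S2 := ContinuousLinearMap.smulRightL ℝ V (V →L[ℝ] V →L[ℝ] ℝ)
  have e1 : b - 1 - 1 = b - 2 := by ring
  have e2 : b - 2 - 1 = b - 3 := by ring
  refine ⟨fun w => (a * b * F w ^ (b - 1)) • F1 w,
    fun w => (a * b * F w ^ (b - 1)) • F2 w
      + (a * b * (b - 1) * F w ^ (b - 2)) • S1 (F1 w) (F1 w),
    fun w => ((a * b * F w ^ (b - 1)) • F3 w
      + S2 ((a * b * ((b - 1) * F w ^ (b - 1 - 1))) • F1 w) (F2 w))
      + ((a * b * (b - 1) * F w ^ (b - 2)) • (S1.precompR V (F1 w) (F2 w)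
          + S1.precompL V (F2 w) (F1 w))
        + S2 ((a * b * (b - 1) * ((b - 2) * F w ^ (b - 2 - 1))) • F1 w) (S1 (F1 w) (F1 w))),
    ⟨fun w => ?_, fun w => ?_, fun w => ?_, ?_⟩, ?_, ?_, ?_⟩
  · convert hp a b w using 2; ring
  · refine ((hp (a * b) (b - 1) w).smul (H.h2 w)).congr_fderiv ?_
    ext k h
    simp [S1, e1]
    ring
  · exact ((hp (a * b) (b - 1) w).smul (H.h3 w)).add
      ((hp (a * b * (b - 1)) (b - 2) w).smul (S1.hasFDerivAt_of_bilinear (H.h2 w) (H.h2 w)))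
  · have := hpc (b - 1)
    have := hpc (b - 1 - 1)
    have := hpc (b - 2)
    have := hpc (b - 2 - 1)
    fun_prop
  · intro w h; simp
  · intro w k h; simp [S1]
  · intro w l k h
    simp [S1, S2, e1, e2]
    ring

end chain

section nem
variable {K : Type*} [TopologicalSpace K] [CompactSpace K]
  {E : Type*} [NormedAddCommGroup E] [NormedSpace ℝ E]
  {G : Type*} [NormedAddCommGroup G] [NormedSpace ℝ G]

/-- pointwise application -/
noncomputable def pwApp (K E G : Type*) [TopologicalSpace K] [CompactSpace K]
    [NormedAddCommGroup E] [NormedSpace ℝ E] [NormedAddCommGroup G] [NormedSpace ℝ G] :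
    C(K, E →L[ℝ] G) →L[ℝ] C(K, E) →L[ℝ] C(K, G) :=
  LinearMap.mkContinuous₂
    (LinearMap.mk₂ ℝ (fun (m : C(K, E →L[ℝ] G)) (h : C(K, E)) =>
      (⟨fun t => m t (h t), by fun_prop⟩ : C(K, G)))
      (by intros; ext; simp) (by intros; ext; simp) (by intros; ext; simp)
      (by intros; ext; simp)) 1 (by
      intro m h
      rw [ContinuousMap.norm_le _ (by positivity)]
      intro t
      rw [one_mul]
      exact ((m t).le_opNorm (h t)).trans
        (mul_le_mul (m.norm_coe_le_norm t) (h.norm_coe_le_norm t) (norm_nonneg _) (norm_nonneg _)))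

@[simp] theorem pwApp_apply (m : C(K, E →L[ℝ] G)) (h : C(K, E)) (t : K) :
    pwApp K E G m h t = m t (h t) := rfl

theorem hasFDerivAt_comp {g : C(E, G)} {g' : C(E, E →L[ℝ] G)}
    (hg : ∀ x, HasFDerivAt g (g' x) x) (w : C(K, E)) :
    HasFDerivAt (fun w : C(K, E) => g.comp w) (pwApp K E G (g'.comp w)) w := by
  rw [hasFDerivAt_iff_isLittleO, Asymptotics.isLittleO_iff]
  intro ε hε
  have hS : IsCompact (Set.range w) := isCompact_range w.continuous
  have := hS.uniformContinuousAt_of_continuousAt g' (fun x _ => g'.continuous.continuousAt)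
    (Metric.dist_mem_uniformity hε)
  obtain ⟨δ, hδ, hd⟩ := Metric.mem_uniformity_dist.1 this
  filter_upwards [Metric.ball_mem_nhds w hδ] with v hv
  rw [ContinuousMap.norm_le _ (by positivity)]
  intro t
  have hvt : v t ∈ Metric.ball (w t) δ :=
    lt_of_le_of_lt (ContinuousMap.dist_apply_le_dist t) hv
  have key := Convex.norm_image_sub_le_of_norm_hasFDerivWithin_le' (f := g) (f' := g')
    (φ := g' (w t)) (C := ε) (s := Metric.ball (w t) δ) (x := w t) (y := v t)
    (fun x _ => (hg x).hasFDerivWithinAt)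
    (fun x hx => by
      have := hd (a := w t) (b := x) (by rw [dist_comm]; exact hx) ⟨t, rfl⟩
      have h2 : dist (g' (w t)) (g' x) < ε := this
      rw [dist_comm, dist_eq_norm] at h2
      exact h2.le)
    (convex_ball _ _) (Metric.mem_ball_self hδ) hvt
  refine key.trans ?_
  gcongr
  exact (v - w).norm_coe_le_norm t

theorem hasFDerivAt_clm_comp {W : Type*} [NormedAddCommGroup W] [NormedSpace ℝ W]
    (A : C(K, G) →L[ℝ] W) {g : C(E, G)} {g' : C(E, E →L[ℝ] G)}
    (hg : ∀ x, HasFDerivAt g (g' x) x) (w : C(K, E)) :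
    HasFDerivAt (fun w : C(K, E) => A (g.comp w))
      (((ContinuousLinearMap.compL ℝ C(K, E) C(K, G) W A).comp (pwApp K E G)) (g'.comp w)) w :=
  A.hasFDerivAt.comp w (hasFDerivAt_comp hg w)

/-- integration -/
noncomputable def intCLM : C(unitInterval, ℝ) →L[ℝ] ℝ :=
  LinearMap.mkContinuous
    { toFun := fun u => ∫ t, u t
      map_add' := fun u v => by
        simpa using integral_add (u.continuous.integrable_of_hasCompactSupport
          (HasCompactSupport.of_compactSpace _)) (v.continuous.integrable_of_hasCompactSupport
          (HasCompactSupport.of_compactSpace _))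
      map_smul' := fun a u => by simpa using integral_const_mul a _ } 1 (by
    intro u
    simpa using norm_integral_le_of_norm_le_const (μ := (volume : Measure unitInterval))
      (Filter.Eventually.of_forall u.norm_coe_le_norm))

theorem intCLM_apply (u : C(unitInterval, ℝ)) : intCLM u = ∫ t, u t := rfl

theorem Chain3.integral {g : E → ℝ} {g1 : E → E →L[ℝ] ℝ} {g2 : E → E →L[ℝ] E →L[ℝ] ℝ}
    {g3 : E → E →L[ℝ] E →L[ℝ] E →L[ℝ] ℝ} (H : Chain3 g g1 g2 g3) :
    ∃ F1 F2 F3, Chain3 (fun w : C(unitInterval, E) => ∫ t, g (w t)) F1 F2 F3 ∧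
      (∀ w h, F1 w h = ∫ t, g1 (w t) (h t)) ∧
      (∀ w k h, F2 w k h = ∫ t, g2 (w t) (k t) (h t)) ∧
      (∀ w l k h, F3 w l k h = ∫ t, g3 (w t) (l t) (k t) (h t)) := by
  have c0 : Continuous g := continuous_iff_continuousAt.2 fun w => (H.h1 w).continuousAt
  have c1 : Continuous g1 := continuous_iff_continuousAt.2 fun w => (H.h2 w).continuousAt
  have c2 : Continuous g2 := continuous_iff_continuousAt.2 fun w => (H.h3 w).continuousAt
  let A1 := (ContinuousLinearMap.compL ℝ C(unitInterval, E) _ _ intCLM).comp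
    (pwApp unitInterval E ℝ)
  let A2 := (ContinuousLinearMap.compL ℝ C(unitInterval, E) _ _ A1).comp
    (pwApp unitInterval E (E →L[ℝ] ℝ))
  let A3 := (ContinuousLinearMap.compL ℝ C(unitInterval, E) _ _ A2).comp
    (pwApp unitInterval E (E →L[ℝ] E →L[ℝ] ℝ))
  refine ⟨fun w => A1 ((⟨g1, c1⟩ : C(E, _)).comp w), fun w => A2 ((⟨g2, c2⟩ : C(E, _)).comp w),
    fun w => A3 ((⟨g3, H.hc⟩ : C(E, _)).comp w), ⟨fun w => ?_, fun w => ?_, fun w => ?_, ?_⟩,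
    fun w h => rfl, fun w k h => rfl, fun w l k h => rfl⟩
  · exact hasFDerivAt_clm_comp intCLM (g := ⟨g, c0⟩) (g' := ⟨g1, c1⟩) H.h1 w
  · exact hasFDerivAt_clm_comp A1 (g := ⟨g1, c1⟩) (g' := ⟨g2, c2⟩) H.h2 w
  · exact hasFDerivAt_clm_comp A2 (g := ⟨g2, c2⟩) (g' := ⟨g3, H.hc⟩) H.h3 w
  · exact A3.continuous.comp (ContinuousMap.continuous_postcomp _)

end nem

section bounds
variable {E : Type*} [NormedAddCommGroup E] [InnerProductSpace ℝ E]

theorem chain_phi (c : ℝ) : Chain3 (fun x : E => c ^ 2 + ‖x‖ ^ 2)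
    (fun x => (2 : ℝ) • innerSL ℝ x) (fun _ => (2 : ℝ) • innerSL ℝ) (fun _ => 0) := by
  refine ⟨fun x => ?_, fun x => ?_, fun x => ?_, continuous_const⟩
  · have := ((hasStrictFDerivAt_norm_sq x).hasFDerivAt).const_add (c ^ 2)
    refine this.congr_fderiv ?_
    ext; simp
  · exact ((innerSL ℝ (E := E)).hasFDerivAt (x := x)).const_smul (2 : ℝ)
  · exact hasFDerivAt_const _ _

theorem chain_g (c q : ℝ) (hc : 0 < c) (hq : 6 ≤ q) :
    ∃ g1 g2 g3, Chain3 (fun x : E => (c ^ 2 + ‖x‖ ^ 2) ^ (q / 2)) g1 g2 g3 ∧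
      (∀ x h, |g1 x h| ≤ q * ((c ^ 2 + ‖x‖ ^ 2) ^ (q / 2)) ^ (1 - 1 / q) * ‖h‖) ∧
      (∀ x k h, |g2 x k h| ≤
        q * (q - 1) * ((c ^ 2 + ‖x‖ ^ 2) ^ (q / 2)) ^ (1 - 2 / q) * (‖k‖ * ‖h‖)) ∧
      (∀ x l k h, |g3 x l k h| ≤ q * (q - 1) * (q - 2) *
        ((c ^ 2 + ‖x‖ ^ 2) ^ (q / 2)) ^ (1 - 3 / q) * (‖l‖ * ‖k‖ * ‖h‖)) := by
  have hpos : ∀ x : E, 0 < c ^ 2 + ‖x‖ ^ 2 := fun x => by positivity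
  obtain ⟨g1, g2, g3, H, H1, H2, H3⟩ := (chain_phi (E := E) c).rpow hpos 1 (q / 2)
  have hq0 : q ≠ 0 := by linarith
  simp only [one_mul] at H
  replace H2 : ∀ x k h, g2 x k h = 1 * (q / 2) * (c ^ 2 + ‖x‖ ^ 2) ^ (q / 2 - 1) *
        (2 * inner ℝ k h) + 1 * (q / 2) * (q / 2 - 1) * (c ^ 2 + ‖x‖ ^ 2) ^ (q / 2 - 2) *
        ((2 * inner ℝ x k) * (2 * inner ℝ x h)) := H2
  replace H3 : ∀ x l k h, g3 x l k h = 1 * (q / 2) * (c ^ 2 + ‖x‖ ^ 2) ^ (q / 2 - 1) * 0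
        + 1 * (q / 2) * (q / 2 - 1) * (c ^ 2 + ‖x‖ ^ 2) ^ (q / 2 - 2) *
          ((2 * inner ℝ x l) * (2 * inner ℝ k h) + (2 * inner ℝ l k) * (2 * inner ℝ x h)
            + (2 * inner ℝ x k) * (2 * inner ℝ l h))
        + 1 * (q / 2) * (q / 2 - 1) * (q / 2 - 2) * (c ^ 2 + ‖x‖ ^ 2) ^ (q / 2 - 3) *
          ((2 * inner ℝ x l) * (2 * inner ℝ x k) * (2 * inner ℝ x h)) := H3
  have key : ∀ x : E, ∃ r : ℝ, 0 < r ∧ ‖x‖ ≤ r ∧ c ^ 2 + ‖x‖ ^ 2 = r ^ 2 := fun x =>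
    ⟨√(c ^ 2 + ‖x‖ ^ 2), Real.sqrt_pos.2 (hpos x), Real.le_sqrt_of_sq_le (by nlinarith),
      (Real.sq_sqrt (hpos x).le).symm⟩
  have pw : ∀ r : ℝ, 0 < r → ∀ y : ℝ, (r ^ 2) ^ y = r ^ (2 * y) := fun r hr y => by
    rw [← Real.rpow_natCast r 2, ← Real.rpow_mul hr.le]; norm_num
  have pw2 : ∀ r : ℝ, 0 < r → ∀ y : ℝ, ((r ^ 2) ^ (q / 2)) ^ (1 - y / q) = r ^ (q - y) :=
    fun r hr y => by
      rw [pw r hr, ← Real.rpow_mul hr.le]; congr 1; field_simp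
  have add1 : ∀ r : ℝ, 0 < r → ∀ y z : ℝ, ∀ n : ℕ, z = y + n → r ^ z = r ^ y * r ^ n :=
    fun r hr y z n h => by rw [h, Real.rpow_add_natCast hr.ne']
  have inn : ∀ x y : E, ∀ r, ‖x‖ ≤ r → |inner ℝ x y| ≤ r * ‖y‖ := fun x y r h =>
    (abs_real_inner_le_norm x y).trans (by gcongr)
  refine ⟨g1, g2, g3, H, fun x h => ?_, fun x k h => ?_, fun x l k h => ?_⟩
  · rw [H1]
    obtain ⟨r, hr, hxr, he⟩ := key x
    simp only [he]
    rw [pw2 r hr, pw r hr, add1 r hr (2 * (q / 2 - 1)) (q - 1) 1 (by push_cast; ring)]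
    have i1 := inn x h r hxr
    have hp := Real.rpow_pos_of_pos hr (2 * (q / 2 - 1))
    set P := r ^ (2 * (q / 2 - 1))
    simp only [smul_apply, innerSL_apply_apply, smul_eq_mul]
    calc |1 * (q / 2) * P * (2 * inner ℝ x h)| = q * P * |inner ℝ x h| := by
          rw [show 1 * (q / 2) * P * (2 * inner ℝ x h) = q * P * inner ℝ x h by ring, abs_mul,
            abs_of_nonneg (a := q * P) (by positivity)]
      _ ≤ q * P * (r * ‖h‖) := by gcongr
      _ = _ := by ring
  · rw [H2]
    obtain ⟨r, hr, hxr, he⟩ := key x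
    simp only [he]
    rw [pw2 r hr, pw r hr, pw r hr, add1 r hr (2 * (q / 2 - 2)) (q - 2) 2 (by push_cast; ring),
      add1 r hr (2 * (q / 2 - 2)) (2 * (q / 2 - 1)) 2 (by push_cast; ring)]
    have i1 := inn x h r hxr
    have i2 := inn x k r hxr
    have i3 := inn k h _ le_rfl
    have hp := Real.rpow_pos_of_pos hr (2 * (q / 2 - 2))
    set P := r ^ (2 * (q / 2 - 2))
    have hq2 : 0 ≤ q - 2 := by linarith
    calc |_| = |(q * P * r ^ 2) * inner ℝ k h + (q * (q - 2) * P) *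
            (inner ℝ x k * inner ℝ x h)| := by congr 1; ring
      _ ≤ (q * P * r ^ 2) * |inner ℝ k h| + (q * (q - 2) * P) *
            (|inner ℝ x k| * |inner ℝ x h|) := by
          refine (abs_add_le _ _).trans (le_of_eq ?_)
          rw [abs_mul, abs_mul (q * (q - 2) * P), abs_mul (inner ℝ x k),
            abs_of_nonneg (a := q * P * r ^ 2) (by positivity),
            abs_of_nonneg (a := q * (q - 2) * P) (by positivity)]
      _ ≤ (q * P * r ^ 2) * (‖k‖ * ‖h‖) + (q * (q - 2) * P) *
            ((r * ‖k‖) * (r * ‖h‖)) := by gcongr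
      _ = _ := by ring
  · rw [H3]
    obtain ⟨r, hr, hxr, he⟩ := key x
    simp only [he]
    rw [pw2 r hr, pw r hr, pw r hr, pw r hr,
      add1 r hr (2 * (q / 2 - 3)) (q - 3) 3 (by push_cast; ring),
      add1 r hr (2 * (q / 2 - 3)) (2 * (q / 2 - 2)) 2 (by push_cast; ring)]
    have i1 := inn x h r hxr
    have i2 := inn x k r hxr
    have i3 := inn x l r hxr
    have j1 := inn k h _ le_rfl
    have j2 := inn l k _ le_rfl
    have j3 := inn l h _ le_rfl
    have hp := Real.rpow_pos_of_pos hr (2 * (q / 2 - 3))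
    set P := r ^ (2 * (q / 2 - 3))
    simp only [mul_zero, zero_add]
    have hq2 : 0 ≤ q - 2 := by linarith
    have hq4 : 0 ≤ q - 4 := by linarith
    calc |_| = |(q * (q - 2) * P * r ^ 2) * (inner ℝ x l * inner ℝ k h + inner ℝ l k * inner ℝ x h
            + inner ℝ x k * inner ℝ l h) + (q * (q - 2) * (q - 4) * P) *
            (inner ℝ x l * inner ℝ x k * inner ℝ x h)| := by congr 1; ring
      _ ≤ (q * (q - 2) * P * r ^ 2) * (|inner ℝ x l| * |inner ℝ k h| + |inner ℝ l k| * |inner ℝ x h|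
            + |inner ℝ x k| * |inner ℝ l h|) + (q * (q - 2) * (q - 4) * P) *
            (|inner ℝ x l| * |inner ℝ x k| * |inner ℝ x h|) := by
          refine (abs_add_le _ _).trans ?_
          rw [abs_mul, abs_mul (q * (q - 2) * (q - 4) * P),
            abs_of_nonneg (a := q * (q - 2) * P * r ^ 2) (by positivity),
            abs_of_nonneg (a := q * (q - 2) * (q - 4) * P) (by positivity)]
          simp only [← abs_mul]
          gcongr
          exact abs_add_three _ _ _
      _ ≤ (q * (q - 2) * P * r ^ 2) * ((r * ‖l‖) * (‖k‖ * ‖h‖) + (‖l‖ * ‖k‖) * (r * ‖h‖)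
            + (r * ‖k‖) * (‖l‖ * ‖h‖)) + (q * (q - 2) * (q - 4) * P) *
            ((r * ‖l‖) * (r * ‖k‖) * (r * ‖h‖)) := by gcongr
      _ = _ := by ring

/-- Jensen step. -/
theorem int_bound (Y u : C(unitInterval, ℝ)) (hY : ∀ t, 0 < Y t) (θ A : ℝ) (h0 : 0 ≤ θ)
    (h1 : θ ≤ 1) (hA : 0 ≤ A) (hu : ∀ t, |u t| ≤ A * Y t ^ θ) :
    |∫ t, u t| ≤ A * (∫ t, Y t) ^ θ := by
  have int : ∀ u : C(unitInterval, ℝ), Integrable (fun t => u t) := fun u =>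
    u.continuous.integrable_of_hasCompactSupport (HasCompactSupport.of_compactSpace _)
  have iY : Integrable (fun t => Y t ^ θ) :=
    int ⟨fun t => Y t ^ θ, Y.continuous.rpow_const fun t => Or.inl (hY t).ne'⟩
  have J := (Real.concaveOn_rpow h0 h1).le_map_integral
    (μ := (volume : Measure unitInterval)) (f := fun t => Y t)
    (fun x _ => (Real.continuousAt_rpow_const x θ (Or.inr h0)).continuousWithinAt) isClosed_Ici
    (Filter.Eventually.of_forall fun t => (hY t).le) (int Y) iY
  calc |∫ t, u t| ≤ ∫ t, |u t| := abs_integral_le_integral_abs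
    _ ≤ ∫ t, A * Y t ^ θ := integral_mono (int u).abs (iY.const_mul A) hu
    _ = A * ∫ t, Y t ^ θ := integral_const_mul _ _
    _ ≤ _ := by gcongr

theorem outer_bound (q F d1l d1k d1h d2kh d2lk d2lh d3 nl nk nh : ℝ) (hq : 6 ≤ q) (hF : 0 < F)
    (hl : 0 ≤ nl) (hk : 0 ≤ nk) (hh : 0 ≤ nh)
    (a1 : |d1l| ≤ q * F ^ (1 - 1 / q) * nl) (a2 : |d1k| ≤ q * F ^ (1 - 1 / q) * nk)
    (a3 : |d1h| ≤ q * F ^ (1 - 1 / q) * nh)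
    (b1 : |d2kh| ≤ q * (q - 1) * F ^ (1 - 2 / q) * (nk * nh))
    (b2 : |d2lk| ≤ q * (q - 1) * F ^ (1 - 2 / q) * (nl * nk))
    (b3 : |d2lh| ≤ q * (q - 1) * F ^ (1 - 2 / q) * (nl * nh))
    (c1 : |d3| ≤ q * (q - 1) * (q - 2) * F ^ (1 - 3 / q) * (nl * nk * nh)) :
    |(1 / q) * F ^ (1 / q - 1) * d3 + (1 / q) * (1 / q - 1) * F ^ (1 / q - 2) *
      (d1l * d2kh + d2lk * d1h + d1k * d2lh) +
      (1 / q) * (1 / q - 1) * (1 / q - 2) * F ^ (1 / q - 3) * (d1l * d1k * d1h)| ≤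
      6 * (q - 1) ^ 2 * F ^ (- (2 / q)) * (nl * nk * nh) := by
  have hq0 : q ≠ 0 := by linarith
  have hqp : 0 < q := by linarith
  have hq1 : 0 ≤ q - 1 := by linarith
  have hq2 : 0 ≤ q - 2 := by linarith
  -- write everything through R = F^(1/q)
  have p1 : F ^ (1 / q - 1) * F ^ (1 - 3 / q) = F ^ (-(2 / q)) := by
    rw [← Real.rpow_add hF]; congr 1; ring
  have p2 : F ^ (1 / q - 2) * (F ^ (1 - 1 / q) * F ^ (1 - 2 / q)) = F ^ (-(2 / q)) := by
    rw [← Real.rpow_add hF, ← Real.rpow_add hF]; congr 1; ring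
  have p3 : F ^ (1 / q - 3) * (F ^ (1 - 1 / q) * F ^ (1 - 1 / q) * F ^ (1 - 1 / q))
      = F ^ (-(2 / q)) := by
    rw [← Real.rpow_add hF, ← Real.rpow_add hF, ← Real.rpow_add hF]; congr 1; ring
  have s1 := Real.rpow_pos_of_pos hF (1 / q - 1)
  have s2 := Real.rpow_pos_of_pos hF (1 / q - 2)
  have s3 := Real.rpow_pos_of_pos hF (1 / q - 3)
  have s4 := Real.rpow_pos_of_pos hF (1 - 1 / q)
  have s5 := Real.rpow_pos_of_pos hF (1 - 2 / q)
  have s6 := Real.rpow_pos_of_pos hF (1 - 3 / q)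
  set P1 := F ^ (1 / q - 1)
  set P2 := F ^ (1 / q - 2)
  set P3 := F ^ (1 / q - 3)
  set Q1 := F ^ (1 - 1 / q)
  set Q2 := F ^ (1 - 2 / q)
  set Q3 := F ^ (1 - 3 / q)
  set R := F ^ (-(2 / q))
  have k1 : (1 / q) * (1 / q - 1) = - ((q - 1) / q ^ 2) := by field_simp; ring
  have k2 : (1 / q) * (1 / q - 1) * (1 / q - 2) = (q - 1) * (2 * q - 1) / q ^ 3 := by
    field_simp; ring
  have hq3 : 0 ≤ 2 * q - 1 := by linarith
  rw [k2, k1]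
  calc |1 / q * P1 * d3 + -((q - 1) / q ^ 2) * P2 * (d1l * d2kh + d2lk * d1h + d1k * d2lh) +
        (q - 1) * (2 * q - 1) / q ^ 3 * P3 * (d1l * d1k * d1h)|
      ≤ 1 / q * P1 * |d3| + ((q - 1) / q ^ 2) * P2 *
        (|d1l| * |d2kh| + |d2lk| * |d1h| + |d1k| * |d2lh|) +
        (q - 1) * (2 * q - 1) / q ^ 3 * P3 * (|d1l| * |d1k| * |d1h|) := by
        refine (abs_add_three _ _ _).trans ?_
        rw [abs_mul (1 / q * P1), abs_mul (-((q - 1) / q ^ 2) * P2), neg_mul, abs_neg,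
          abs_mul ((q - 1) * (2 * q - 1) / q ^ 3 * P3),
          abs_of_nonneg (a := 1 / q * P1) (by positivity),
          abs_of_nonneg (a := (q - 1) / q ^ 2 * P2) (by positivity),
          abs_of_nonneg (a := (q - 1) * (2 * q - 1) / q ^ 3 * P3) (by positivity)]
        simp only [← abs_mul]
        gcongr
        exact abs_add_three _ _ _
    _ ≤ 1 / q * P1 * (q * (q - 1) * (q - 2) * Q3 * (nl * nk * nh)) + ((q - 1) / q ^ 2) * P2 *
        ((q * Q1 * nl) * (q * (q - 1) * Q2 * (nk * nh)) +
          (q * (q - 1) * Q2 * (nl * nk)) * (q * Q1 * nh) +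
          (q * Q1 * nk) * (q * (q - 1) * Q2 * (nl * nh))) +
        (q - 1) * (2 * q - 1) / q ^ 3 * P3 * ((q * Q1 * nl) * (q * Q1 * nk) * (q * Q1 * nh)) := by
        gcongr
    _ = ((q - 1) * (q - 2) * (P1 * Q3) + 3 * (q - 1) ^ 2 * (P2 * (Q1 * Q2))
        + (q - 1) * (2 * q - 1) * (P3 * (Q1 * Q1 * Q1))) * (nl * nk * nh) := by
        field_simp; ring
    _ = _ := by rw [p1, p2, p3]; ring

end bounds

theorem stmt_17 (p : ℕ) (hp : 1 ≤ p)
    (s : C(unitInterval, EuclideanSpace ℝ (Fin p)))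
    (c η q : ℝ) (hc : 0 < c) (hη : 0 < η) (hη1 : η ≤ 1) (hq : 4 ≤ q) (hq6 : 6 ≤ q)
    (f : C(unitInterval, EuclideanSpace ℝ (Fin p)) → ℝ)
    (hf : ∀ w, f w
      = η⁻¹ * (∫ t, (c ^ 2 + ‖w t - s t‖ ^ 2) ^ (q / 2)) ^ (1 / q)) :
    Differentiable ℝ f ∧
    Differentiable ℝ (fderiv ℝ f) ∧
    Differentiable ℝ (fderiv ℝ (fderiv ℝ f)) ∧
    (∀ w, ‖fderiv ℝ (fderiv ℝ (fderiv ℝ f)) w‖ ≤ 15 * q ^ 2 / (η * c ^ 2)) := by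
  have hq0 : 0 < q := by linarith
  have hq1 : 0 ≤ q - 1 := by linarith
  have hq2 : 0 ≤ q - 2 := by linarith
  obtain ⟨g1, g2, g3, Hg, B1, B2, B3⟩ := chain_g (E := EuclideanSpace ℝ (Fin p)) c q hc hq6
  obtain ⟨F1, F2, F3, HF, e1, e2, e3⟩ := Hg.integral
  have cg1 : Continuous g1 := continuous_iff_continuousAt.2 fun w => (Hg.h2 w).continuousAt
  have cg2 : Continuous g2 := continuous_iff_continuousAt.2 fun w => (Hg.h3 w).continuousAt
  have cg3 := Hg.hc
  let Y : C(unitInterval, EuclideanSpace ℝ (Fin p)) → C(unitInterval, ℝ) := fun w =>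
    ⟨fun t => (c ^ 2 + ‖w t‖ ^ 2) ^ (q / 2),
      Continuous.rpow_const (by fun_prop) fun t => Or.inl (by positivity)⟩
  have hYc : ∀ w t, c ^ q ≤ Y w t := fun w t => by
    have : c ^ q = (c ^ 2) ^ (q / 2) := by
      rw [← Real.rpow_natCast c 2, ← Real.rpow_mul hc.le]; congr 1; push_cast; ring
    rw [this]
    exact Real.rpow_le_rpow (by positivity) (by nlinarith [sq_nonneg ‖w t‖]) (by positivity)
  have hcq : 0 < c ^ q := Real.rpow_pos_of_pos hc q
  have hY : ∀ w t, 0 < Y w t := fun w t => hcq.trans_le (hYc w t)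
  have hFc : ∀ w, c ^ q ≤ ∫ t, Y w t := fun w => by
    have := integral_mono (μ := (volume : Measure unitInterval)) (integrable_const (c ^ q))
      ((Y w).continuous.integrable_of_hasCompactSupport (HasCompactSupport.of_compactSpace _))
      (hYc w)
    simpa using this
  have hFpos : ∀ w, 0 < ∫ t, Y w t := fun w => hcq.trans_le (hFc w)
  have th : ∀ j : ℝ, 0 ≤ j → j ≤ 3 → 0 ≤ 1 - j / q ∧ 1 - j / q ≤ 1 := fun j h0 h3 => by
    have h1 : j / q ≤ 1 := (div_le_one hq0).2 (by linarith)
    have h2 : 0 ≤ j / q := by positivity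
    constructor <;> linarith
  have D1 : ∀ w h, |F1 w h| ≤ q * (∫ t, Y w t) ^ (1 - 1 / q) * ‖h‖ := fun w h => by
    rw [e1, mul_right_comm]
    refine int_bound (Y w) ⟨fun t => g1 (w t) (h t), by fun_prop⟩ (hY w) _ _
      (th 1 (by norm_num) (by norm_num)).1 (th 1 (by norm_num) (by norm_num)).2 (by positivity)
      fun t => (B1 (w t) (h t)).trans ?_
    rw [mul_right_comm]
    have := h.norm_coe_le_norm t
    have := Real.rpow_pos_of_pos (hY w t) (1 - 1 / q)
    change q * ‖h t‖ * (Y w t) ^ (1 - 1 / q) ≤ _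
    gcongr
  have D2 : ∀ w k h, |F2 w k h| ≤
      q * (q - 1) * (∫ t, Y w t) ^ (1 - 2 / q) * (‖k‖ * ‖h‖) := fun w k h => by
    rw [e2, mul_right_comm]
    refine int_bound (Y w) ⟨fun t => g2 (w t) (k t) (h t), by fun_prop⟩ (hY w) _ _
      (th 2 (by norm_num) (by norm_num)).1 (th 2 (by norm_num) (by norm_num)).2 (by positivity)
      fun t => (B2 (w t) (k t) (h t)).trans ?_
    rw [mul_right_comm]
    have := h.norm_coe_le_norm t
    have := k.norm_coe_le_norm t
    have := Real.rpow_pos_of_pos (hY w t) (1 - 2 / q)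
    change q * (q - 1) * (‖k t‖ * ‖h t‖) * (Y w t) ^ (1 - 2 / q) ≤ _
    gcongr
  have D3 : ∀ w l k h, |F3 w l k h| ≤ q * (q - 1) * (q - 2) *
      (∫ t, Y w t) ^ (1 - 3 / q) * (‖l‖ * ‖k‖ * ‖h‖) := fun w l k h => by
    rw [e3, mul_right_comm]
    refine int_bound (Y w) ⟨fun t => g3 (w t) (l t) (k t) (h t), by fun_prop⟩ (hY w) _ _
      (th 3 (by norm_num) (by norm_num)).1 (th 3 (by norm_num) (by norm_num)).2 (by positivity)
      fun t => (B3 (w t) (l t) (k t) (h t)).trans ?_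
    rw [mul_right_comm]
    have := h.norm_coe_le_norm t
    have := k.norm_coe_le_norm t
    have := l.norm_coe_le_norm t
    have := Real.rpow_pos_of_pos (hY w t) (1 - 3 / q)
    change q * (q - 1) * (q - 2) * (‖l t‖ * ‖k t‖ * ‖h t‖) * (Y w t) ^ (1 - 3 / q) ≤ _
    gcongr
  obtain ⟨G1, G2, G3, HG, -, -, E3⟩ := (HF.shift s).rpow (fun w => hFpos (w - s)) η⁻¹ (1 / q)
  have hff : f = fun w => η⁻¹ * (∫ t, Y (w - s) t) ^ (1 / q) := funext hf
  have H1 : ∀ w, HasFDerivAt f (G1 w) w := by rw [hff]; exact HG.h1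
  have f1 : fderiv ℝ f = G1 := funext fun w => (H1 w).fderiv
  have f2 : fderiv ℝ G1 = G2 := funext fun w => (HG.h2 w).fderiv
  have f3 : fderiv ℝ G2 = G3 := funext fun w => (HG.h3 w).fderiv
  rw [f1, f2, f3]
  refine ⟨fun w => (H1 w).differentiableAt, fun w => (HG.h2 w).differentiableAt,
    fun w => (HG.h3 w).differentiableAt, fun w => ?_⟩
  have hM : 0 ≤ 15 * q ^ 2 / (η * c ^ 2) := by positivity
  have main : ∀ l k h, ‖G3 w l k h‖ ≤ 15 * q ^ 2 / (η * c ^ 2) * ‖l‖ * ‖k‖ * ‖h‖ := by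
    intro l k h
    have ob := outer_bound q (∫ t, Y (w - s) t) _ _ _ _ _ _ _ ‖l‖ ‖k‖ ‖h‖ hq6 (hFpos (w - s))
      (norm_nonneg _) (norm_nonneg _) (norm_nonneg _) (D1 (w - s) l) (D1 (w - s) k)
      (D1 (w - s) h) (D2 (w - s) k h) (D2 (w - s) l k) (D2 (w - s) l h) (D3 (w - s) l k h)
    have hR : (∫ t, Y (w - s) t) ^ (-(2 / q)) ≤ (c ^ 2)⁻¹ := by
      calc (∫ t, Y (w - s) t) ^ (-(2 / q)) ≤ (c ^ q) ^ (-(2 / q)) :=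
            Real.rpow_le_rpow_of_nonpos hcq (hFc _) (by
              have : 0 ≤ 2 / q := by positivity
              linarith)
        _ = (c ^ 2)⁻¹ := by
            rw [← Real.rpow_mul hc.le, ← Real.rpow_natCast c 2, ← Real.rpow_neg hc.le]
            congr 1; field_simp; norm_num
    have hfin : |G3 w l k h| ≤ η⁻¹ * (6 * (q - 1) ^ 2 * (∫ t, Y (w - s) t) ^ (-(2 / q)) *
        (‖l‖ * ‖k‖ * ‖h‖)) := by
      refine le_trans (le_of_eq ?_) (mul_le_mul_of_nonneg_left ob (inv_nonneg.2 hη.le))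
      nth_rw 1 [← abs_of_nonneg (inv_nonneg.2 hη.le)]
      rw [← abs_mul, E3]
      congr 1
      simp only [Y, ContinuousMap.coe_mk]
      ring
    rw [Real.norm_eq_abs]
    calc _ ≤ _ := hfin
      _ ≤ η⁻¹ * (15 * q ^ 2 * (c ^ 2)⁻¹ * (‖l‖ * ‖k‖ * ‖h‖)) := by
        have hRp := Real.rpow_pos_of_pos (hFpos (w - s)) (-(2 / q))
        have h6 : 6 * (q - 1) ^ 2 ≤ 15 * q ^ 2 := by nlinarith
        gcongr
      _ = _ := by field_simp
  refine ContinuousLinearMap.opNorm_le_bound _ hM fun l => ?_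
  refine ContinuousLinearMap.opNorm_le_bound _ (by positivity) fun k => ?_
  exact ContinuousLinearMap.opNorm_le_bound _ (by positivity) fun h => main l k h
end
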